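/- arXiv:1305.1511 — 8 statements merged into one kernel-verified Lean document; each statement's English description precedes it below -/
import Mathlib

section
/- Let V be a real vector space of dimension 2n+1 and let (φ, ξ, η) be an almost paracontact structure on V. If g is any nondegenerate symmetric bilinear form on V satisfying the compatibility condition g(φX, φY) = −g(X, Y) + η(X)η(Y) for all X, Y ∈ V, then g necessarily has signature (n+1, n), i.e. a maximal positive-definite subspace has dimension n+1 and a maximal negative-definite subspace has dimension n. -/
/-!
The signature is read off from the identity `g(φX + tξ, φX + tξ) = -g(X, X) + η(X)² + t²`.
On a negative-definite `N` it makes `φ(N) + ℝξ` positive definite of dimension `dim N + 1`; on a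
positive-definite `P` it makes `φ(P ∩ ker η)` negative definite of dimension at least `dim P - 1`.
Hence the positive index exceeds the negative one by exactly one, and by Sylvester's law the two
indices and the dimension of the radical sum to `dim V`.
-/

open Module

section QuadraticForm

variable {R M N : Type*} [CommRing R] [AddCommGroup M] [Module R M] [AddCommGroup N] [Module R N]

lemma radical_toQuadraticMap_eq_ker [Invertible (2 : R)] {B : LinearMap.BilinForm R M}
    (hB : B.IsSymm) : B.toQuadraticMap.radical = LinearMap.ker B := by
  rw [QuadraticMap.radical_eq_ker_associated, QuadraticMap.associated_left_inverse R hB.eq]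

variable [LinearOrder R] {Q : QuadraticForm R M}

lemma posDef_restrict_iff {P : Submodule R M} :
    (Q.restrict P).PosDef ↔ ∀ x ∈ P, x ≠ 0 → 0 < Q x := by
  simp [QuadraticMap.PosDef]

lemma negDef_restrict_iff [IsOrderedRing R] {P : Submodule R M} :
    ((-Q).restrict P).PosDef ↔ ∀ x ∈ P, x ≠ 0 → Q x < 0 := by
  simp [QuadraticMap.PosDef]

lemma finrank_le_sigPos_of_posDef_comp [Module.Finite R M] [StrongRankCondition R]
    {f : N →ₗ[R] M} (hf : (Q.comp f).PosDef) : finrank R N ≤ sigPos Q := by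
  have f_injective : Function.Injective f := by
    refine (injective_iff_map_eq_zero f).2 fun x hx ↦ hf.anisotropic x ?_
    rw [QuadraticMap.comp_apply, hx, map_zero]
  rw [← LinearMap.finrank_range_of_inj f_injective]
  refine le_sigPos_of_posDef Q (posDef_restrict_iff.2 ?_)
  rintro _ ⟨x, rfl⟩ hx
  exact hf x (by rintro rfl; exact hx (map_zero f))

lemma sigPos_le_sigNeg_add_one_of_neg_on_ker {K V : Type*} [Field K] [LinearOrder K]
    [AddCommGroup V] [Module K V] [FiniteDimensional K V] {Q : QuadraticForm K V}
    {φ : V →ₗ[K] V} {η : V →ₗ[K] K} (hQ : ∀ x ∈ LinearMap.ker η, Q (φ x) = -Q x) :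
    sigPos Q ≤ sigNeg Q + 1 := by
  obtain ⟨P, finrank_P, hP⟩ := exists_finrank_eq_sigPos_and_posDef Q
  let ηP : P →ₗ[K] K := η.domRestrict P
  have finrank_P_le : finrank K P ≤ finrank K (LinearMap.ker ηP) + 1 := by
    have rank_nullity := LinearMap.finrank_range_add_finrank_ker ηP
    have finrank_range_le := (LinearMap.range ηP).finrank_le.trans_eq (finrank_self K)
    lia
  let f : LinearMap.ker ηP →ₗ[K] V := φ.domRestrict P ∘ₗ (LinearMap.ker ηP).subtype
  have f_negDef : ((-Q).comp f).PosDef := by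
    rintro ⟨x, hx⟩ hx0
    have Q_pos : 0 < Q x := hP x (by simpa using hx0)
    change 0 < -Q (φ x)
    rwa [hQ x hx, neg_neg]
  have finrank_ker_le : finrank K (LinearMap.ker ηP) ≤ sigNeg Q :=
    finrank_le_sigPos_of_posDef_comp f_negDef
  lia

end QuadraticForm

/-- An almost paracontact structure `(φ, ξ, η)` on a module, through its two algebraic identities;
the eigenspaces of `φ` are left arbitrary. -/
structure IsAlmostParacontact {R M : Type*} [CommRing R] [AddCommGroup M] [Module R M]
    (φ : M →ₗ[R] M) (ξ : M) (η : M →ₗ[R] R) : Prop where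
  eta_xi : η ξ = 1
  phi_phi (x : M) : φ (φ x) = x - η x • ξ

namespace IsAlmostParacontact

section Reduced

variable {R M : Type*} [CommRing R] [IsReduced R] [AddCommGroup M] [Module R M]
  {φ : M →ₗ[R] M} {ξ : M} {η : M →ₗ[R] R} {g : LinearMap.BilinForm R M}

lemma phi_xi (h : IsAlmostParacontact φ ξ η) : φ ξ = 0 := by
  have phi_phi_xi : φ (φ ξ) = 0 := by simp [h.phi_phi, h.eta_xi]
  have phi_xi_eq : φ ξ = η (φ ξ) • ξ := by
    have phi_cubed_xi := h.phi_phi (φ ξ)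
    rw [phi_phi_xi, map_zero] at phi_cubed_xi
    exact sub_eq_zero.1 phi_cubed_xi.symm
  have eta_phi_xi_sq : η (φ ξ) ^ 2 = 0 := by
    calc η (φ ξ) ^ 2 = η (φ (η (φ ξ) • ξ)) := by rw [map_smul, map_smul, smul_eq_mul, sq]
      _ = 0 := by rw [← phi_xi_eq, phi_phi_xi, map_zero]
  rw [phi_xi_eq, pow_eq_zero_iff two_ne_zero |>.1 eta_phi_xi_sq, zero_smul]

lemma eta_phi (h : IsAlmostParacontact φ ξ η) (x : M) : η (φ x) = 0 := by
  have phi_cubed : φ x = φ x - η (φ x) • ξ := by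
    calc φ x = φ (φ (φ x)) := by rw [h.phi_phi x, map_sub, map_smul, h.phi_xi, smul_zero, sub_zero]
      _ = φ x - η (φ x) • ξ := h.phi_phi (φ x)
  simpa [h.eta_xi] using congrArg η (sub_eq_self.1 phi_cubed.symm)

lemma form_xi_right (h : IsAlmostParacontact φ ξ η)
    (hg : ∀ x y, g (φ x) (φ y) = -g x y + η x * η y) (x : M) : g x ξ = η x := by
  have := hg x ξ
  rw [h.phi_xi, map_zero, h.eta_xi] at this
  linear_combination this

lemma form_xi_left (h : IsAlmostParacontact φ ξ η)
    (hg : ∀ x y, g (φ x) (φ y) = -g x y + η x * η y) (x : M) : g ξ x = η x := by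
  refine h.form_xi_right (g := g.flip) (fun y z ↦ ?_) x
  change g (φ z) (φ y) = -g z y + η y * η z
  rw [hg, mul_comm]

lemma form_phi_add_smul_xi_self (h : IsAlmostParacontact φ ξ η)
    (hg : ∀ x y, g (φ x) (φ y) = -g x y + η x * η y) (x : M) (t : R) :
    g (φ x + t • ξ) (φ x + t • ξ) = -g x x + η x ^ 2 + t ^ 2 := by
  simp only [map_add, LinearMap.add_apply, map_smul, LinearMap.smul_apply, smul_eq_mul, hg,
    h.form_xi_left hg, h.form_xi_right hg, h.eta_phi, h.eta_xi]
  ring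

end Reduced

section Signature

variable {K V : Type*} [Field K] [LinearOrder K] [IsStrictOrderedRing K]
  [AddCommGroup V] [Module K V] [FiniteDimensional K V]
  {φ : V →ₗ[K] V} {ξ : V} {η : V →ₗ[K] K} {g : LinearMap.BilinForm K V}

lemma sigNeg_add_one_le_sigPos (h : IsAlmostParacontact φ ξ η)
    (hg : ∀ x y, g (φ x) (φ y) = -g x y + η x * η y) :
    sigNeg g.toQuadraticMap + 1 ≤ sigPos g.toQuadraticMap := by
  obtain ⟨N, finrank_N, hN⟩ := exists_finrank_eq_sigNeg_and_negDef g.toQuadraticMap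
  let f : N × K →ₗ[K] V := (φ.domRestrict N).coprod (LinearMap.toSpanSingleton K V ξ)
  have f_posDef : (g.toQuadraticMap.comp f).PosDef := by
    rintro ⟨x, t⟩ hxt
    have hf : g.toQuadraticMap.comp f (x, t) = -g x x + η x ^ 2 + t ^ 2 :=
      h.form_phi_add_smul_xi_self hg x t
    rw [hf]
    obtain rfl | hx := eq_or_ne x 0
    · have ht : t ≠ 0 := by simpa using hxt
      simpa using sq_pos_of_ne_zero ht
    · have : 0 < -g x x := hN x hx
      positivity
  simpa [finrank_prod, finrank_N] using finrank_le_sigPos_of_posDef_comp f_posDef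

theorem sigPos_eq_sigNeg_add_one (h : IsAlmostParacontact φ ξ η)
    (hg : ∀ x y, g (φ x) (φ y) = -g x y + η x * η y) :
    sigPos g.toQuadraticMap = sigNeg g.toQuadraticMap + 1 := by
  refine le_antisymm (sigPos_le_sigNeg_add_one_of_neg_on_ker (φ := φ) (η := η) ?_)
    (h.sigNeg_add_one_le_sigPos hg)
  intro x (hx : η x = 0)
  simp [hg, hx]

end Signature

end IsAlmostParacontact

theorem signature_of_almost_paracontact_metric_general
    {K V : Type*} [Field K] [LinearOrder K] [IsStrictOrderedRing K] [AddCommGroup V] [Module K V]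
    {n : ℕ} {φ : V →ₗ[K] V} {ξ : V} {η : V →ₗ[K] K} {g : LinearMap.BilinForm K V}
    (hdim : finrank K V = 2 * n + 1 + finrank K g.toQuadraticMap.radical)
    (h : IsAlmostParacontact φ ξ η) (hg : ∀ x y, g (φ x) (φ y) = -g x y + η x * η y) :
    (∃ P : Submodule K V, finrank K P = n + 1 ∧ ∀ x ∈ P, x ≠ 0 → 0 < g x x) ∧
    (∀ P : Submodule K V, (∀ x ∈ P, x ≠ 0 → 0 < g x x) → finrank K P ≤ n + 1) ∧
    (∃ N : Submodule K V, finrank K N = n ∧ ∀ x ∈ N, x ≠ 0 → g x x < 0) ∧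
    (∀ N : Submodule K V, (∀ x ∈ N, x ≠ 0 → g x x < 0) → finrank K N ≤ n) := by
  let Q : QuadraticForm K V := g.toQuadraticMap
  have : FiniteDimensional K V := .of_finrank_pos (by lia)
  have sigPos_add_sigNeg : sigPos Q + sigNeg Q = 2 * n + 1 :=
    Nat.add_right_cancel (QuadraticForm.sigPos_add_sigNeg_add_radical.trans hdim)
  have sigPos_eq_sigNeg_add_one : sigPos Q = sigNeg Q + 1 := h.sigPos_eq_sigNeg_add_one hg
  have sigPos_eq : sigPos Q = n + 1 := by lia
  have sigNeg_eq : sigNeg Q = n := by lia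
  obtain ⟨P, finrank_P, hP⟩ := exists_finrank_eq_sigPos_and_posDef Q
  obtain ⟨N, finrank_N, hN⟩ := exists_finrank_eq_sigNeg_and_negDef Q
  exact ⟨⟨P, finrank_P.trans sigPos_eq, posDef_restrict_iff.1 hP⟩,
    fun P hP ↦ (le_sigPos_of_posDef Q (posDef_restrict_iff.2 hP)).trans_eq sigPos_eq,
    ⟨N, finrank_N.trans sigNeg_eq, negDef_restrict_iff.1 hN⟩,
    fun N hN ↦ (le_sigNeg_of_negDef Q (negDef_restrict_iff.2 hN)).trans_eq sigNeg_eq⟩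

/-- If `(φ, ξ, η)` is an almost paracontact structure on a real vector
space `V` of dimension `2n+1` and `g` is a nondegenerate symmetric bilinear form compatible
with the structure (`g(φX, φY) = −g(X,Y) + η(X)η(Y)`), then `g` has signature `(n+1, n)`:
a maximal positive-definite subspace has dimension `n+1` and a maximal negative-definite
subspace has dimension `n`. -/
theorem signature_of_almost_paracontact_metric
    (n : ℕ) (V : Type*) [AddCommGroup V] [Module ℝ V] [FiniteDimensional ℝ V]
    (hdim : Module.finrank ℝ V = 2 * n + 1)
    (φ : V →ₗ[ℝ] V) (ξ : V) (η : V →ₗ[ℝ] ℝ)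
    (hηξ : η ξ = 1)
    (hφφ : ∀ x : V, φ (φ x) = x - η x • ξ)
    (hDplus : Module.finrank ℝ (Module.End.eigenspace φ 1) = n)
    (hDminus : Module.finrank ℝ (Module.End.eigenspace φ (-1)) = n)
    (g : LinearMap.BilinForm ℝ V)
    (hgsymm : ∀ x y : V, g x y = g y x)
    (hgnd : ∀ x : V, (∀ y : V, g x y = 0) → x = 0)
    (hcompat : ∀ x y : V, g (φ x) (φ y) = - g x y + η x * η y) :
    (∃ P : Submodule ℝ V, Module.finrank ℝ P = n + 1 ∧ ∀ x ∈ P, x ≠ 0 → 0 < g x x) ∧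
    (∀ P : Submodule ℝ V, (∀ x ∈ P, x ≠ 0 → 0 < g x x) → Module.finrank ℝ P ≤ n + 1) ∧
    (∃ N : Submodule ℝ V, Module.finrank ℝ N = n ∧ ∀ x ∈ N, x ≠ 0 → g x x < 0) ∧
    (∀ N : Submodule ℝ V, (∀ x ∈ N, x ≠ 0 → g x x < 0) → Module.finrank ℝ N ≤ n) := by
  have radical_eq_bot : g.toQuadraticMap.radical = ⊥ := by
    rw [radical_toQuadraticMap_eq_ker ⟨hgsymm⟩, LinearMap.ker_eq_bot']
    exact fun x hx ↦ hgnd x (LinearMap.congr_fun hx)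
  exact signature_of_almost_paracontact_metric_general (by simp [radical_eq_bot, hdim])
    ⟨hηξ, hφφ⟩ hcompat
end

section
/- Let (V, φ, ξ, η, g) be an almost paracontact metric vector space of dimension 2n+1 and let h be an endomorphism of V that is g-self-adjoint (g(hX, Y) = g(X, hY)), anticommutes with φ (h∘φ = −φ∘h), satisfies hξ = 0, and satisfies h∘h = (1+κ)·φ∘φ for a real constant κ with κ > −1. Set λ = √(1+κ). Then h is diagonalizable with eigenvalues 0, λ and −λ: the 0-eigenspace is ℝξ, the eigenspaces D_h(λ) and D_h(−λ) each have dimension n, the three eigenspaces are mutually g-orthogonal, φ maps D_h(λ) onto D_h(−λ) and D_h(−λ) onto D_h(λ), and D_h(±λ) = { X ± (1/λ)·hX : X ∈ D^± }, where D⁺ and D⁻ denote the eigenspaces of φ in ker η for the eigenvalues +1 and −1. -/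
/-!
Since `h² = λ²φ²`, the operator `h²` acts as `λ²` on the eigenspaces `D^±` of `φ`, and `φ²` is the
identity on the eigenspaces of `h` for `±λ`. Two anticommuting operators related in this way have
isomorphic eigenspaces: `X ↦ X + λ⁻¹hX` carries `D⁺` onto `D_h(λ)`, and its inverse is
`Y ↦ (Y + φY) / 2`. The splitting of `V` comes from `h³ = λ²h`, which holds because `h` kills `ξ`.
-/

open Module End

section CommRing

variable {R V : Type*} [CommRing R] [AddCommGroup V] [Module R V]

theorem bilinForm_eq_zero_of_mem_eigenspace_of_ne [NoZeroDivisors R]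
    {g : LinearMap.BilinForm R V} {f : End R V} (hf : ∀ x y, g (f x) y = g x (f y))
    {a b : R} (hab : a ≠ b) {x y : V} (hx : x ∈ eigenspace f a) (hy : y ∈ eigenspace f b) :
    g x y = 0 := by
  have hscale : a * g x y = b * g x y := by
    simpa only [mem_eigenspace_iff.1 hx, mem_eigenspace_iff.1 hy, map_smul, LinearMap.smul_apply,
      smul_eq_mul] using hf x y
  exact (mul_eq_mul_right_iff.1 hscale).resolve_left hab

theorem apply_mem_eigenspace_neg {φ h : End R V} (hanti : ∀ x, h (φ x) = -φ (h x))
    {l : R} {y : V} (hy : y ∈ eigenspace h l) : φ y ∈ eigenspace h (-l) := by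
  rw [mem_eigenspace_iff, hanti, mem_eigenspace_iff.1 hy, map_smul, neg_smul]

end CommRing

section Field

variable {K V : Type*} [Field K] [AddCommGroup V] [Module K V]

theorem add_inv_smul_apply_mem_eigenspace {f : End K V} {a : K} (ha : a ≠ 0) {x : V}
    (hx : f (f x) = a ^ 2 • x) : x + a⁻¹ • f x ∈ eigenspace f a := by
  rw [mem_eigenspace_iff, map_add, map_smul, hx]
  match_scalars <;> field_simp

theorem eigenspace_zero_sup_eigenspace_sup_eigenspace_neg_eq_top [NeZero (2 : K)] {f : End K V}
    {a : K} (ha : a ≠ 0) (hf : ∀ x, f (f (f x)) = a ^ 2 • f x) :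
    eigenspace f 0 ⊔ eigenspace f a ⊔ eigenspace f (-a) = ⊤ := by
  refine eq_top_iff.2 fun x _ ↦ ?_
  have hzero : x - (a ^ 2)⁻¹ • f (f x) ∈ eigenspace f 0 := by
    rw [mem_eigenspace_iff, zero_smul, map_sub, map_smul, hf, inv_smul_smul₀ (pow_ne_zero 2 ha),
      sub_self]
  have hpos : f x + a⁻¹ • f (f x) ∈ eigenspace f a :=
    add_inv_smul_apply_mem_eigenspace ha (hf x)
  have hneg : f x + (-a)⁻¹ • f (f x) ∈ eigenspace f (-a) :=
    add_inv_smul_apply_mem_eigenspace (neg_ne_zero.2 ha) (by rw [neg_sq, hf])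
  have hdecomp : x = x - (a ^ 2)⁻¹ • f (f x) + (2 * a)⁻¹ • (f x + a⁻¹ • f (f x))
      + (-(2 * a)⁻¹) • (f x + (-a)⁻¹ • f (f x)) := by
    have h2 : (2 : K) ≠ 0 := two_ne_zero
    match_scalars <;> field_simp <;> ring
  rw [hdecomp]
  exact Submodule.add_mem_sup (Submodule.add_mem_sup hzero (Submodule.smul_mem _ _ hpos))
    (Submodule.smul_mem _ _ hneg)

theorem eigenspace_zero_eq_span_singleton {φ h : End K V} {ξ : V} {η : V →ₗ[K] K} {c : K}
    (hφφ : ∀ x, φ (φ x) = x - η x • ξ) (hhξ : h ξ = 0) (hc : c ≠ 0)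
    (hh : ∀ x, h (h x) = c • φ (φ x)) : eigenspace h 0 = Submodule.span K {ξ} := by
  refine le_antisymm (fun x hx ↦ ?_) ?_
  · have hhx : h x = 0 := by simpa only [zero_smul] using mem_eigenspace_iff.1 hx
    have hφφx : φ (φ x) = 0 := by simpa [hhx, hc] using (hh x).symm
    exact Submodule.mem_span_singleton.2 ⟨η x, (sub_eq_zero.1 (hφφ x ▸ hφφx)).symm⟩
  · rw [Submodule.span_singleton_le_iff_mem, mem_eigenspace_iff, hhξ, zero_smul]

section Anticommuting

variable {φ h : End K V} {s l : K}

theorem apply_apply_of_mem_eigenspace (hl : l ≠ 0)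
    (hsq : ∀ x, s ^ 2 • h (h x) = l ^ 2 • φ (φ x)) {y : V} (hy : y ∈ eigenspace h l) :
    φ (φ y) = s ^ 2 • y := by
  have hhy : h (h y) = l ^ 2 • y := by
    rw [mem_eigenspace_iff.1 hy, map_smul, mem_eigenspace_iff.1 hy, smul_smul, sq]
  refine smul_right_injective V (pow_ne_zero 2 hl) ?_
  simp only [← hsq, hhy, smul_comm (s ^ 2)]

theorem map_eigenspace_eq_eigenspace_neg (hs : s ≠ 0) (hl : l ≠ 0)
    (hanti : ∀ x, h (φ x) = -φ (h x)) (hsq : ∀ x, s ^ 2 • h (h x) = l ^ 2 • φ (φ x)) :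
    (eigenspace h l).map φ = eigenspace h (-l) := by
  refine le_antisymm (Submodule.map_le_iff_le_comap.2 fun y ↦ apply_mem_eigenspace_neg hanti)
    fun y hy ↦ ⟨(s ^ 2)⁻¹ • φ y, Submodule.smul_mem _ _ ?_, ?_⟩
  · simpa only [neg_neg] using apply_mem_eigenspace_neg hanti hy
  · rw [map_smul, apply_apply_of_mem_eigenspace (neg_ne_zero.2 hl) (by simpa only [neg_sq]) hy,
      inv_smul_smul₀ (pow_ne_zero 2 hs)]

theorem one_add_inv_smul_apply_one_add_inv_smul_apply (hs : s ≠ 0)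
    (hanti : ∀ x, h (φ x) = -φ (h x)) {x : V} (hx : x ∈ eigenspace φ s) :
    (1 + s⁻¹ • φ) ((1 + l⁻¹ • h) x) = (2 : K) • x := by
  have hφhx : φ (h x) = -(s • h x) := by
    rw [← map_smul, ← mem_eigenspace_iff.1 hx, hanti, neg_neg]
  simp only [LinearMap.add_apply, one_apply, LinearMap.smul_apply, map_add, map_smul, hφhx,
    mem_eigenspace_iff.1 hx]
  match_scalars <;> field_simp <;> ring

/-- For anticommuting `φ` and `h` with `s²h² = l²φ²`, the isomorphism `x ↦ x + l⁻¹hx` from the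
`s`-eigenspace of `φ` to the `l`-eigenspace of `h`, with inverse `y ↦ (y + s⁻¹φy) / 2`. -/
def eigenspaceEquivOfAnticomm [NeZero (2 : K)] (hs : s ≠ 0) (hl : l ≠ 0)
    (hanti : ∀ x, h (φ x) = -φ (h x)) (hsq : ∀ x, s ^ 2 • h (h x) = l ^ 2 • φ (φ x)) :
    eigenspace φ s ≃ₗ[K] eigenspace h l :=
  LinearEquiv.ofLinearMap
    ((1 + l⁻¹ • h).restrict fun _ hx ↦ add_inv_smul_apply_mem_eigenspace hl <|
      apply_apply_of_mem_eigenspace hs (fun x ↦ (hsq x).symm) hx)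
    ((2 : K)⁻¹ • (1 + s⁻¹ • φ).restrict fun _ hy ↦ add_inv_smul_apply_mem_eigenspace hs <|
      apply_apply_of_mem_eigenspace hl hsq hy)
    (LinearMap.ext fun y ↦ Subtype.ext <| by
      have hanti' : ∀ x, φ (h x) = -h (φ x) := fun x ↦ by rw [hanti, neg_neg]
      exact (map_smul (1 + l⁻¹ • h) _ _).trans <|
        (congrArg _ (one_add_inv_smul_apply_one_add_inv_smul_apply hl hanti' y.2)).trans <|
          inv_smul_smul₀ two_ne_zero _)
    (LinearMap.ext fun x ↦ Subtype.ext <|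
      (congrArg _ (one_add_inv_smul_apply_one_add_inv_smul_apply hs hanti x.2)).trans <|
        inv_smul_smul₀ two_ne_zero _)

theorem eigenspace_eq_image_of_anticomm [NeZero (2 : K)] (hs : s ≠ 0) (hl : l ≠ 0)
    (hanti : ∀ x, h (φ x) = -φ (h x)) (hsq : ∀ x, s ^ 2 • h (h x) = l ^ 2 • φ (φ x)) :
    (eigenspace h l : Set V) = (fun x ↦ x + l⁻¹ • h x) '' (eigenspace φ s : Set V) := by
  let e := eigenspaceEquivOfAnticomm hs hl hanti hsq
  refine Set.Subset.antisymm (fun y hy ↦ ?_) (Set.image_subset_iff.2 fun x hx ↦ (e ⟨x, hx⟩).2)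
  exact ⟨e.symm ⟨y, hy⟩, (e.symm ⟨y, hy⟩).2, congrArg Subtype.val (e.apply_symm_apply ⟨y, hy⟩)⟩

end Anticommuting

theorem h_diagonalizable_kappa_gt_neg_one_general [NeZero (2 : K)]
    {φ : End K V} {ξ : V} {η : V →ₗ[K] K} (hφφ : ∀ x, φ (φ x) = x - η x • ξ)
    {g : LinearMap.BilinForm K V} {h : End K V} (hsa : ∀ x y, g (h x) y = g x (h y))
    (hanti : ∀ x, h (φ x) = -φ (h x)) (hhξ : h ξ = 0) {l : K} (hl : l ≠ 0)
    (hh : ∀ x, h (h x) = l ^ 2 • φ (φ x)) :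
    eigenspace h 0 = Submodule.span K {ξ} ∧
    Module.rank K (eigenspace h l) = Module.rank K (eigenspace φ 1) ∧
    Module.rank K (eigenspace h (-l)) = Module.rank K (eigenspace φ (-1)) ∧
    (∀ x ∈ eigenspace h 0, ∀ y ∈ eigenspace h l, g x y = 0) ∧
    (∀ x ∈ eigenspace h 0, ∀ y ∈ eigenspace h (-l), g x y = 0) ∧
    (∀ x ∈ eigenspace h l, ∀ y ∈ eigenspace h (-l), g x y = 0) ∧
    eigenspace h 0 ⊔ eigenspace h l ⊔ eigenspace h (-l) = ⊤ ∧
    (eigenspace h l).map φ = eigenspace h (-l) ∧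
    (eigenspace h (-l)).map φ = eigenspace h l ∧
    (eigenspace h l : Set V) = (fun x ↦ x + l⁻¹ • h x) '' (eigenspace φ 1 : Set V) ∧
    (eigenspace h (-l) : Set V) = (fun x ↦ x - l⁻¹ • h x) '' (eigenspace φ (-1) : Set V) := by
  have hl' : -l ≠ 0 := neg_ne_zero.2 hl
  have hne : l ≠ -l := fun hll ↦ mul_ne_zero two_ne_zero hl (by linear_combination hll)
  have hs : (-1 : K) ≠ 0 := neg_ne_zero.2 one_ne_zero
  have hsq : ∀ x, (1 : K) ^ 2 • h (h x) = l ^ 2 • φ (φ x) := by simpa only [one_pow, one_smul]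
  have hsq' : ∀ x, (-1 : K) ^ 2 • h (h x) = (-l) ^ 2 • φ (φ x) := by simpa only [neg_sq]
  have hcube : ∀ x, h (h (h x)) = l ^ 2 • h x := fun x ↦ by
    rw [hh x, map_smul, hφφ, map_sub, map_smul, hhξ, smul_zero, sub_zero]
  refine ⟨eigenspace_zero_eq_span_singleton hφφ hhξ (pow_ne_zero 2 hl) hh,
    (eigenspaceEquivOfAnticomm one_ne_zero hl hanti hsq).rank_eq.symm,
    (eigenspaceEquivOfAnticomm hs hl' hanti hsq').rank_eq.symm,
    fun _ hx _ hy ↦ bilinForm_eq_zero_of_mem_eigenspace_of_ne hsa hl.symm hx hy,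
    fun _ hx _ hy ↦ bilinForm_eq_zero_of_mem_eigenspace_of_ne hsa hl'.symm hx hy,
    fun _ hx _ hy ↦ bilinForm_eq_zero_of_mem_eigenspace_of_ne hsa hne hx hy,
    eigenspace_zero_sup_eigenspace_sup_eigenspace_neg_eq_top hl hcube,
    map_eigenspace_eq_eigenspace_neg one_ne_zero hl hanti hsq,
    by simpa only [neg_neg] using map_eigenspace_eq_eigenspace_neg hs hl' hanti hsq',
    eigenspace_eq_image_of_anticomm one_ne_zero hl hanti hsq, ?_⟩
  simpa only [inv_neg, neg_smul, ← sub_eq_add_neg]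
    using eigenspace_eq_image_of_anticomm hs hl' hanti hsq'

end Field

/-- On an almost paracontact metric vector space, a `g`-self-adjoint
endomorphism `h` anticommuting with `φ`, killing `ξ` and satisfying `h² = (1+κ)φ²` for a
constant `κ > −1` is diagonalizable with eigenvalues `0, λ, −λ` (`λ = √(1+κ)`): the
`0`-eigenspace is `ℝξ`, the `±λ`-eigenspaces have dimension `n`, the eigenspaces are
mutually `g`-orthogonal, `φ` interchanges the `±λ`-eigenspaces, and
`D_h(±λ) = {X ± (1/λ)hX : X ∈ D^±}`. -/
theorem h_diagonalizable_kappa_gt_neg_one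
    (n : ℕ) (V : Type*) [AddCommGroup V] [Module ℝ V] [FiniteDimensional ℝ V]
    (hdim : Module.finrank ℝ V = 2 * n + 1)
    (φ : V →ₗ[ℝ] V) (ξ : V) (η : V →ₗ[ℝ] ℝ)
    (hηξ : η ξ = 1)
    (hφφ : ∀ x : V, φ (φ x) = x - η x • ξ)
    (hDplus : Module.finrank ℝ (Module.End.eigenspace φ 1) = n)
    (hDminus : Module.finrank ℝ (Module.End.eigenspace φ (-1)) = n)
    (g : LinearMap.BilinForm ℝ V)
    (hgsymm : ∀ x y : V, g x y = g y x)
    (hgnd : ∀ x : V, (∀ y : V, g x y = 0) → x = 0)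
    (hcompat : ∀ x y : V, g (φ x) (φ y) = - g x y + η x * η y)
    (h : V →ₗ[ℝ] V)
    (hsa : ∀ x y : V, g (h x) y = g x (h y))
    (hanti : ∀ x : V, h (φ x) = - φ (h x))
    (hhξ : h ξ = 0)
    (κ : ℝ) (hκ : -1 < κ)
    (hh : ∀ x : V, h (h x) = (1 + κ) • φ (φ x))
    (lam : ℝ) (hlam : lam = Real.sqrt (1 + κ)) :
    Module.End.eigenspace h 0 = Submodule.span ℝ {ξ} ∧
    Module.finrank ℝ (Module.End.eigenspace h lam) = n ∧
    Module.finrank ℝ (Module.End.eigenspace h (-lam)) = n ∧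
    (∀ x ∈ Module.End.eigenspace h 0, ∀ y ∈ Module.End.eigenspace h lam, g x y = 0) ∧
    (∀ x ∈ Module.End.eigenspace h 0, ∀ y ∈ Module.End.eigenspace h (-lam), g x y = 0) ∧
    (∀ x ∈ Module.End.eigenspace h lam, ∀ y ∈ Module.End.eigenspace h (-lam), g x y = 0) ∧
    Module.End.eigenspace h 0 ⊔ Module.End.eigenspace h lam ⊔ Module.End.eigenspace h (-lam)
      = ⊤ ∧
    Submodule.map φ (Module.End.eigenspace h lam) = Module.End.eigenspace h (-lam) ∧
    Submodule.map φ (Module.End.eigenspace h (-lam)) = Module.End.eigenspace h lam ∧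
    (Module.End.eigenspace h lam : Set V)
      = (fun x => x + lam⁻¹ • h x) '' (Module.End.eigenspace φ 1 : Set V) ∧
    (Module.End.eigenspace h (-lam) : Set V)
      = (fun x => x - lam⁻¹ • h x) '' (Module.End.eigenspace φ (-1) : Set V) := by
  subst hlam
  have hpos : 0 < 1 + κ := by linarith
  obtain ⟨hzero, hplus, hminus, hrest⟩ := h_diagonalizable_kappa_gt_neg_one_general hφφ hsa hanti
    hhξ (Real.sqrt_pos.2 hpos).ne' (by simpa only [Real.sq_sqrt hpos.le] using hh)
  exact ⟨hzero, (congrArg Cardinal.toNat hplus).trans hDplus,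
    (congrArg Cardinal.toNat hminus).trans hDminus, hrest⟩
end

section
/- Let (V, φ, ξ, η, g) be an almost paracontact metric vector space of dimension 2n+1 with φ g-skew-adjoint (g(φX, Y) = −g(X, φY)), and let h be an endomorphism of V that is g-self-adjoint, anticommutes with φ, satisfies hξ = 0, and satisfies h∘h = (1+κ)·φ∘φ for a real constant κ with κ < −1. Set λ = √(−1−κ). Then the operator φ∘h is g-self-adjoint, anticommutes with φ, satisfies (φ∘h)∘(φ∘h) = −(1+κ)·φ∘φ, and is diagonalizable with eigenvalues 0, λ and −λ: its 0-eigenspace is ℝξ, the eigenspaces D_{φh}(λ) and D_{φh}(−λ) each have dimension n, the three eigenspaces are mutually g-orthogonal, φ interchanges D_{φh}(λ) and D_{φh}(−λ), and D_{φh}(±λ) = { X ± (1/λ)·(φ∘h)X : X ∈ D^± }, where D⁺ and D⁻ denote the eigenspaces of φ in ker η for the eigenvalues +1 and −1. -/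
/-!
Put `A = φ ∘ h`. Since `h` anticommutes with `φ` and `φ³ = φ`, the endomorphism `A` anticommutes
with `φ` and `A² = λ² φ²`, hence `A³ = λ² A`. The last identity splits `V` into the eigenspaces of
`A` for `0`, `λ` and `-λ`, and the kernel of `A` is that of `φ²`, namely the line of `ξ`. The key
to the other two eigenspaces is a symmetry between anticommuting endomorphisms `f` and `g` with
`μ² g² = ν² f²`: the operators `1 + ν⁻¹ g` and `1 + μ⁻¹ f` exchange the `μ`-eigenspace of `f` and
the `ν`-eigenspace of `g`, and on these they are inverse to each other up to a factor `2`. It is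
applied to `f = φ`, `μ = ±1` and `g = A`, `ν = ±λ`.
-/

section CommRing

variable {R M : Type*} [CommRing R] [AddCommGroup M] [Module R M] {f g : Module.End R M}

theorem apply_mem_eigenspace_neg_of_anticommute (hfg : ∀ x, f (g x) = -g (f x)) {μ : R} {x : M}
    (hx : x ∈ f.eigenspace μ) : g x ∈ f.eigenspace (-μ) := by
  rw [Module.End.mem_eigenspace_iff] at hx ⊢
  rw [hfg, hx, map_smul, neg_smul]

theorem map_eigenspace_eq_eigenspace_neg_of_anticommute (hfg : ∀ x, f (g x) = -g (f x)) {μ : R}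
    (hg : ∀ y ∈ f.eigenspace (-μ), g (g y) = y) :
    (f.eigenspace μ).map g = f.eigenspace (-μ) := by
  refine le_antisymm ?_ fun y hy ↦ ⟨g y, ?_, hg y hy⟩
  · rintro _ ⟨x, hx, rfl⟩
    exact apply_mem_eigenspace_neg_of_anticommute hfg hx
  · simpa using apply_mem_eigenspace_neg_of_anticommute hfg hy

theorem isSelfAdjoint_comp_of_isSkewAdjoint_of_anticommute {B : LinearMap.BilinForm R M}
    (hf : B.IsSkewAdjoint f) (hg : B.IsSelfAdjoint g) (hgf : ∀ x, g (f x) = -f (g x)) :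
    B.IsSelfAdjoint (f ∘ₗ g) := fun x y ↦ calc
  B (f (g x)) y = B (g x) (-f y) := hf (g x) y
  _ = B x (g (-f y)) := hg x (-f y)
  _ = B x (f (g y)) := by rw [map_neg, hgf, neg_neg]

theorem isOrtho_of_mem_eigenspace_of_ne [NoZeroDivisors R] {B : LinearMap.BilinForm R M}
    (hf : B.IsSelfAdjoint f) {μ ν : R} (hμν : μ ≠ ν) {x y : M} (hx : x ∈ f.eigenspace μ)
    (hy : y ∈ f.eigenspace ν) : B x y = 0 := by
  rw [Module.End.mem_eigenspace_iff] at hx hy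
  have key : μ * B x y = ν * B x y := by simpa [hx, hy] using hf x y
  have : (μ - ν) * B x y = 0 := by rw [sub_mul, key, sub_self]
  exact (mul_eq_zero.mp this).resolve_left (sub_ne_zero.mpr hμν)

end CommRing

section Paracontact

variable {R M : Type*} [CommRing R] [AddCommGroup M] [Module R M]
  {φ h : Module.End R M} {ξ : M} {η : Module.Dual R M}

theorem paracontact_apply_reeb [IsReduced R] (hηξ : η ξ = 1)
    (hφφ : ∀ x, φ (φ x) = x - η x • ξ) : φ ξ = 0 := by
  have hφφξ : φ (φ ξ) = 0 := by simp [hφφ, hηξ]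
  have hφξ : φ ξ = η (φ ξ) • ξ := by
    rw [← sub_eq_zero, ← hφφ, hφφξ, map_zero]
  have hsq : η (φ ξ) ^ 2 = 0 := calc
    η (φ ξ) ^ 2 = η (η (φ ξ) • φ ξ) := by rw [map_smul, smul_eq_mul, sq]
    _ = η (φ (φ ξ)) := by rw [← map_smul, ← hφξ]
    _ = 0 := by rw [hφφξ, map_zero]
  rw [hφξ, pow_eq_zero_iff two_ne_zero |>.mp hsq, zero_smul]

theorem paracontact_apply_apply_apply [IsReduced R] (hηξ : η ξ = 1)
    (hφφ : ∀ x, φ (φ x) = x - η x • ξ) (x : M) : φ (φ (φ x)) = φ x := by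
  rw [hφφ x, map_sub, map_smul, paracontact_apply_reeb hηξ hφφ, smul_zero, sub_zero]

theorem sq_comp_of_anticommute (hφ : ∀ x, φ (φ (φ x)) = φ x) (hanti : ∀ x, h (φ x) = -φ (h x))
    {c : R} (hh : ∀ x, h (h x) = c • φ (φ x)) (x : M) :
    φ (h (φ (h x))) = -c • φ (φ x) := calc
  φ (h (φ (h x))) = -φ (φ (h (h x))) := by rw [hanti, map_neg]
  _ = -c • φ (φ (φ (φ x))) := by rw [hh, map_smul, map_smul, neg_smul]
  _ = -c • φ (φ x) := by rw [hφ]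

end Paracontact

section Field

variable {K V : Type*} [Field K] [AddCommGroup V] [Module K V] {f g : Module.End K V} {μ ν : K}

theorem add_inv_smul_mem_eigenspace (hμ : μ ≠ 0) {x : V} (hx : f (f x) = μ ^ 2 • x) :
    x + μ⁻¹ • f x ∈ f.eigenspace μ := by
  rw [Module.End.mem_eigenspace_iff, map_add, map_smul, hx]
  match_scalars <;> field_simp

theorem apply_apply_eq_smul_of_mem_eigenspace (hμ : μ ≠ 0)
    (hsq : ∀ x, μ ^ 2 • g (g x) = ν ^ 2 • f (f x)) {x : V} (hx : x ∈ f.eigenspace μ) :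
    g (g x) = ν ^ 2 • x := by
  rw [Module.End.mem_eigenspace_iff] at hx
  refine smul_right_injective V (pow_ne_zero 2 hμ) ?_
  simp only [hsq, hx, map_smul]
  module

theorem map_eigenspace_eq_eigenspace_neg_of_sq_eq (hfg : ∀ x, f (g x) = -g (f x)) (hμ : μ ≠ 0)
    (hsq : ∀ x, f (f x) = μ ^ 2 • g (g x)) : (f.eigenspace μ).map g = f.eigenspace (-μ) := by
  have hgg (x : V) : (-μ) ^ 2 • g (g x) = (1 : K) ^ 2 • f (f x) := by
    rw [neg_sq, one_pow, one_smul, hsq]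
  refine map_eigenspace_eq_eigenspace_neg_of_anticommute hfg fun y hy ↦ ?_
  simpa using apply_apply_eq_smul_of_mem_eigenspace (neg_ne_zero.mpr hμ) hgg hy

theorem one_add_inv_smul_one_add_smul_of_anticommute (hfg : ∀ x, f (g x) = -g (f x)) (hμ : μ ≠ 0)
    (c : K) {x : V} (hx : x ∈ f.eigenspace μ) :
    (x + c • g x) + μ⁻¹ • f (x + c • g x) = (2 : K) • x := by
  rw [Module.End.mem_eigenspace_iff] at hx
  simp only [map_add, map_smul, hfg, hx]
  match_scalars <;> field_simp <;> ring

/-- The isomorphism `x ↦ x + ν⁻¹ g x` from the `μ`-eigenspace of `f` onto the `ν`-eigenspace of `g`,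
for anticommuting `f` and `g` with `μ² g² = ν² f²`. -/
def eigenspaceEquivOfAnticommute [NeZero (2 : K)] (hfg : ∀ x, f (g x) = -g (f x)) (hμ : μ ≠ 0)
    (hν : ν ≠ 0) (hsq : ∀ x, μ ^ 2 • g (g x) = ν ^ 2 • f (f x)) :
    f.eigenspace μ ≃ₗ[K] g.eigenspace ν where
  toFun x := ⟨x + ν⁻¹ • g x,
    add_inv_smul_mem_eigenspace hν (apply_apply_eq_smul_of_mem_eigenspace hμ hsq x.2)⟩
  map_add' x y := by ext; simp only [Submodule.coe_add, map_add]; module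
  map_smul' c x := by ext; simp only [Submodule.coe_smul, map_smul, RingHom.id_apply]; module
  invFun y := ⟨(2 : K)⁻¹ • (y + μ⁻¹ • f y), Submodule.smul_mem _ _ <|
    add_inv_smul_mem_eigenspace hμ <|
      apply_apply_eq_smul_of_mem_eigenspace hν (fun x ↦ (hsq x).symm) y.2⟩
  left_inv x := by
    ext
    simp only [one_add_inv_smul_one_add_smul_of_anticommute hfg hμ ν⁻¹ x.2,
      inv_smul_smul₀ (two_ne_zero (α := K))]
  right_inv y := by
    have hgf (x : V) : g (f x) = -f (g x) := by rw [hfg, neg_neg]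
    ext
    simp only [map_smul]
    rw [smul_comm ν⁻¹, ← smul_add, one_add_inv_smul_one_add_smul_of_anticommute hgf hν μ⁻¹ y.2,
      inv_smul_smul₀ two_ne_zero]

theorem image_add_inv_smul_eigenspace_of_anticommute [NeZero (2 : K)]
    (hfg : ∀ x, f (g x) = -g (f x)) (hμ : μ ≠ 0) (hν : ν ≠ 0)
    (hsq : ∀ x, μ ^ 2 • g (g x) = ν ^ 2 • f (f x)) :
    (fun x ↦ x + ν⁻¹ • g x) '' (f.eigenspace μ : Set V) = g.eigenspace ν := by
  let e := eigenspaceEquivOfAnticommute hfg hμ hν hsq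
  refine Set.Subset.antisymm ?_ fun y hy ↦ ?_
  · rintro _ ⟨x, hx, rfl⟩
    exact (e ⟨x, hx⟩).2
  · exact ⟨e.symm ⟨y, hy⟩, (e.symm ⟨y, hy⟩).2, congrArg Subtype.val (e.apply_symm_apply ⟨y, hy⟩)⟩

theorem eigenspace_sup_eq_top_of_cube_eq [NeZero (2 : K)] (hμ : μ ≠ 0)
    (hf : ∀ x, f (f (f x)) = μ ^ 2 • f x) :
    f.eigenspace 0 ⊔ f.eigenspace μ ⊔ f.eigenspace (-μ) = ⊤ := by
  refine eq_top_iff.mpr fun x _ ↦ ?_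
  have h2 : (2 : K) ≠ 0 := two_ne_zero
  have hdecomp : x = (x - (μ ^ 2)⁻¹ • f (f x)) + (2 * μ ^ 2)⁻¹ • (f (f x) + μ • f x) +
      (2 * μ ^ 2)⁻¹ • (f (f x) - μ • f x) := by
    match_scalars <;> field_simp <;> ring
  rw [hdecomp]
  refine Submodule.add_mem_sup (Submodule.add_mem_sup ?_ (Submodule.smul_mem _ _ ?_))
    (Submodule.smul_mem _ _ ?_) <;>
  simp only [Module.End.mem_eigenspace_iff, map_add, map_sub, map_smul, hf]
  · rw [inv_smul_smul₀ (pow_ne_zero 2 hμ), sub_self, zero_smul]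
  · module
  · module

theorem eigenspace_zero_eq_span_reeb {φ A : Module.End K V} {ξ : V} {η : Module.Dual K V}
    (hφφ : ∀ x, φ (φ x) = x - η x • ξ) (hAξ : A ξ = 0) (hμ : μ ≠ 0)
    (hA : ∀ x, A (A x) = μ ^ 2 • φ (φ x)) : A.eigenspace 0 = K ∙ ξ := by
  rw [Module.End.eigenspace_zero]
  refine le_antisymm (fun x hx ↦ Submodule.mem_span_singleton.mpr ⟨η x, ?_⟩) ?_
  · have hsq : μ ^ 2 • φ (φ x) = 0 := by rw [← hA, LinearMap.mem_ker.mp hx, map_zero]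
    have hφφx : x - η x • ξ = 0 := by
      rw [← hφφ, (smul_eq_zero.mp hsq).resolve_left (pow_ne_zero 2 hμ)]
    exact (sub_eq_zero.mp hφφx).symm
  · rw [Submodule.span_singleton_le_iff_mem]
    exact hAξ

end Field

theorem phi_h_diagonalizable_kappa_lt_neg_one_general
    {K V : Type*} [Field K] [NeZero (2 : K)] [AddCommGroup V] [Module K V]
    {φ : V →ₗ[K] V} {ξ : V} {η : V →ₗ[K] K}
    (hηξ : η ξ = 1) (hφφ : ∀ x, φ (φ x) = x - η x • ξ)
    {g : LinearMap.BilinForm K V} (hskew : g.IsSkewAdjoint φ)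
    {h : V →ₗ[K] V} (hsa : g.IsSelfAdjoint h) (hanti : ∀ x, h (φ x) = -φ (h x))
    {κ : K} (hκ : κ ≠ -1) (hh : ∀ x, h (h x) = (1 + κ) • φ (φ x))
    {lam : K} (hlam : lam ^ 2 = -(1 + κ)) :
    g.IsSelfAdjoint (φ ∘ₗ h) ∧
    (∀ x, φ (h (φ x)) = -φ (φ (h x))) ∧
    (∀ x, φ (h (φ (h x))) = (-(1 + κ)) • φ (φ x)) ∧
    Module.End.eigenspace (φ ∘ₗ h) 0 = K ∙ ξ ∧
    Module.rank K (Module.End.eigenspace (φ ∘ₗ h) lam) =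
      Module.rank K (Module.End.eigenspace φ 1) ∧
    Module.rank K (Module.End.eigenspace (φ ∘ₗ h) (-lam)) =
      Module.rank K (Module.End.eigenspace φ (-1)) ∧
    (∀ x ∈ Module.End.eigenspace (φ ∘ₗ h) 0,
      ∀ y ∈ Module.End.eigenspace (φ ∘ₗ h) lam, g x y = 0) ∧
    (∀ x ∈ Module.End.eigenspace (φ ∘ₗ h) 0,
      ∀ y ∈ Module.End.eigenspace (φ ∘ₗ h) (-lam), g x y = 0) ∧
    (∀ x ∈ Module.End.eigenspace (φ ∘ₗ h) lam,
      ∀ y ∈ Module.End.eigenspace (φ ∘ₗ h) (-lam), g x y = 0) ∧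
    Module.End.eigenspace (φ ∘ₗ h) 0 ⊔ Module.End.eigenspace (φ ∘ₗ h) lam ⊔
      Module.End.eigenspace (φ ∘ₗ h) (-lam) = ⊤ ∧
    Submodule.map φ (Module.End.eigenspace (φ ∘ₗ h) lam) =
      Module.End.eigenspace (φ ∘ₗ h) (-lam) ∧
    Submodule.map φ (Module.End.eigenspace (φ ∘ₗ h) (-lam)) =
      Module.End.eigenspace (φ ∘ₗ h) lam ∧
    (Module.End.eigenspace (φ ∘ₗ h) lam : Set V) =
      (fun x ↦ x + lam⁻¹ • φ (h x)) '' (Module.End.eigenspace φ 1 : Set V) ∧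
    (Module.End.eigenspace (φ ∘ₗ h) (-lam) : Set V) =
      (fun x ↦ x - lam⁻¹ • φ (h x)) '' (Module.End.eigenspace φ (-1) : Set V) := by
  have hφ := paracontact_apply_apply_apply hηξ hφφ
  have hlam0 : lam ≠ 0 := fun h0 ↦ hκ (by linear_combination (-lam) * h0 + hlam)
  have hneg0 : -lam ≠ 0 := neg_ne_zero.mpr hlam0
  have hlam_ne_neg : lam ≠ -lam := fun heq ↦
    mul_ne_zero two_ne_zero hlam0 (by linear_combination heq)
  have hsa' := isSelfAdjoint_comp_of_isSkewAdjoint_of_anticommute hskew hsa hanti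
  have hAφ (x : V) : φ (h (φ x)) = -φ (φ (h x)) := by rw [hanti, map_neg]
  have hφA (x : V) : φ (φ (h x)) = -φ (h (φ x)) := by rw [hAφ, neg_neg]
  have hAA (x : V) : φ (h (φ (h x))) = -(1 + κ) • φ (φ x) := sq_comp_of_anticommute hφ hanti hh x
  have hA (x : V) : φ (h (φ (h x))) = lam ^ 2 • φ (φ x) := by rw [hAA, hlam]
  have hA_pos (x : V) : (1 : K) ^ 2 • φ (h (φ (h x))) = lam ^ 2 • φ (φ x) := by simp [hA]
  have hA_neg (x : V) : (-1 : K) ^ 2 • φ (h (φ (h x))) = (-lam) ^ 2 • φ (φ x) := by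
    simp [hA]
  have hAξ : φ (h ξ) = 0 := by
    rw [← neg_eq_zero, ← hanti, paracontact_apply_reeb hηξ hφφ, map_zero]
  have hneg1 : (-1 : K) ≠ 0 := neg_ne_zero.mpr one_ne_zero
  refine ⟨hsa', hAφ, hAA, eigenspace_zero_eq_span_reeb hφφ hAξ hlam0 hA,
    (eigenspaceEquivOfAnticommute hφA one_ne_zero hlam0 hA_pos).rank_eq.symm,
    (eigenspaceEquivOfAnticommute hφA hneg1 hneg0 hA_neg).rank_eq.symm,
    fun _ hx _ ↦ isOrtho_of_mem_eigenspace_of_ne hsa' hlam0.symm hx,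
    fun _ hx _ ↦ isOrtho_of_mem_eigenspace_of_ne hsa' hneg0.symm hx,
    fun _ hx _ ↦ isOrtho_of_mem_eigenspace_of_ne hsa' hlam_ne_neg hx,
    eigenspace_sup_eq_top_of_cube_eq hlam0 fun x ↦ (hA _).trans (congrArg _ (hφ (h x))),
    map_eigenspace_eq_eigenspace_neg_of_sq_eq hAφ hlam0 hA, ?_,
    (image_add_inv_smul_eigenspace_of_anticommute hφA one_ne_zero hlam0 hA_pos).symm, ?_⟩
  · simpa using map_eigenspace_eq_eigenspace_neg_of_sq_eq hAφ hneg0 (by simpa using hA)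
  · rw [← image_add_inv_smul_eigenspace_of_anticommute hφA hneg1 hneg0 hA_neg]
    refine Set.image_congr fun x _ ↦ ?_
    rw [inv_neg, neg_smul, ← sub_eq_add_neg, LinearMap.comp_apply]

/-- On an almost paracontact metric vector space with `φ` `g`-skew-adjoint,
if `h` is `g`-self-adjoint, anticommutes with `φ`, kills `ξ` and satisfies `h² = (1+κ)φ²`
with `κ < −1`, then `φ∘h` is `g`-self-adjoint, anticommutes with `φ`, satisfies
`(φh)² = −(1+κ)φ²`, and is diagonalizable with eigenvalues `0, λ, −λ` (`λ = √(−1−κ)`), with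
`0`-eigenspace `ℝξ`, `±λ`-eigenspaces of dimension `n`, mutually `g`-orthogonal eigenspaces,
`φ` interchanging the `±λ`-eigenspaces, and `D_{φh}(±λ) = {X ± (1/λ)(φh)X : X ∈ D^±}`. -/
theorem phi_h_diagonalizable_kappa_lt_neg_one
    (n : ℕ) (V : Type*) [AddCommGroup V] [Module ℝ V] [FiniteDimensional ℝ V]
    (hdim : Module.finrank ℝ V = 2 * n + 1)
    (φ : V →ₗ[ℝ] V) (ξ : V) (η : V →ₗ[ℝ] ℝ)
    (hηξ : η ξ = 1)
    (hφφ : ∀ x : V, φ (φ x) = x - η x • ξ)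
    (hDplus : Module.finrank ℝ (Module.End.eigenspace φ 1) = n)
    (hDminus : Module.finrank ℝ (Module.End.eigenspace φ (-1)) = n)
    (g : LinearMap.BilinForm ℝ V)
    (hgsymm : ∀ x y : V, g x y = g y x)
    (hgnd : ∀ x : V, (∀ y : V, g x y = 0) → x = 0)
    (hcompat : ∀ x y : V, g (φ x) (φ y) = - g x y + η x * η y)
    (hskew : ∀ x y : V, g (φ x) y = - g x (φ y))
    (h : V →ₗ[ℝ] V)
    (hsa : ∀ x y : V, g (h x) y = g x (h y))
    (hanti : ∀ x : V, h (φ x) = - φ (h x))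
    (hhξ : h ξ = 0)
    (κ : ℝ) (hκ : κ < -1)
    (hh : ∀ x : V, h (h x) = (1 + κ) • φ (φ x))
    (lam : ℝ) (hlam : lam = Real.sqrt (-1 - κ)) :
    (∀ x y : V, g (φ (h x)) y = g x (φ (h y))) ∧
    (∀ x : V, φ (h (φ x)) = - φ (φ (h x))) ∧
    (∀ x : V, φ (h (φ (h x))) = (-(1 + κ)) • φ (φ x)) ∧
    Module.End.eigenspace (φ ∘ₗ h) 0 = Submodule.span ℝ {ξ} ∧
    Module.finrank ℝ (Module.End.eigenspace (φ ∘ₗ h) lam) = n ∧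
    Module.finrank ℝ (Module.End.eigenspace (φ ∘ₗ h) (-lam)) = n ∧
    (∀ x ∈ Module.End.eigenspace (φ ∘ₗ h) 0,
      ∀ y ∈ Module.End.eigenspace (φ ∘ₗ h) lam, g x y = 0) ∧
    (∀ x ∈ Module.End.eigenspace (φ ∘ₗ h) 0,
      ∀ y ∈ Module.End.eigenspace (φ ∘ₗ h) (-lam), g x y = 0) ∧
    (∀ x ∈ Module.End.eigenspace (φ ∘ₗ h) lam,
      ∀ y ∈ Module.End.eigenspace (φ ∘ₗ h) (-lam), g x y = 0) ∧
    Module.End.eigenspace (φ ∘ₗ h) 0 ⊔ Module.End.eigenspace (φ ∘ₗ h) lam ⊔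
      Module.End.eigenspace (φ ∘ₗ h) (-lam) = ⊤ ∧
    Submodule.map φ (Module.End.eigenspace (φ ∘ₗ h) lam)
      = Module.End.eigenspace (φ ∘ₗ h) (-lam) ∧
    Submodule.map φ (Module.End.eigenspace (φ ∘ₗ h) (-lam))
      = Module.End.eigenspace (φ ∘ₗ h) lam ∧
    (Module.End.eigenspace (φ ∘ₗ h) lam : Set V)
      = (fun x => x + lam⁻¹ • φ (h x)) '' (Module.End.eigenspace φ 1 : Set V) ∧
    (Module.End.eigenspace (φ ∘ₗ h) (-lam) : Set V)
      = (fun x => x - lam⁻¹ • φ (h x)) '' (Module.End.eigenspace φ (-1) : Set V) := by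
  have hlam_sq : lam ^ 2 = -(1 + κ) := by rw [hlam, Real.sq_sqrt (by linarith)]; ring
  obtain ⟨sa, anti, sq, ker, rank_pos, rank_neg, rest⟩ :=
    phi_h_diagonalizable_kappa_lt_neg_one_general hηξ hφφ (fun x y ↦ by simp [hskew]) hsa hanti
      hκ.ne hh hlam_sq
  exact ⟨sa, anti, sq, ker, (congrArg Cardinal.toNat rank_pos).trans hDplus,
    (congrArg Cardinal.toNat rank_neg).trans hDminus, rest⟩
end

section
/- Let V be a 3-dimensional real vector space with a symmetric bilinear form g admitting a pseudo-orthonormal basis e₁, e₂, e₃, and let h be the endomorphism of V given by the Lorentzian canonical form (IV): h e₁ = λe₁ + e₃, h e₂ = λe₂, h e₃ = e₂ + λe₃ for a real number λ. If tr h = 0 then λ = 0, and then every vector ξ ∈ V with hξ = 0 lies in the span of e₂ and hence satisfies g(ξ, ξ) = 0. In particular there is no ξ ∈ V with hξ = 0 and g(ξ, ξ) = 1, so the tensor h of a 3-dimensional paracontact metric manifold can never have canonical form (IV). -/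
/-! Since `tr h = 3λ`, the trace condition forces `λ = 0`, and then `h` is a single nilpotent
Jordan block `e₁ ↦ e₃ ↦ e₂ ↦ 0`. Its kernel is the line through the last vector of this chain,
and in a pseudo-orthonormal basis that vector `e₂` is null. -/

theorem bilinForm_self_eq_zero_of_mem_span_singleton {R M : Type*} [CommSemiring R]
    [AddCommMonoid M] [Module R M] {g : LinearMap.BilinForm R M} {x y : M}
    (hx : g x x = 0) (hy : y ∈ Submodule.span R {x}) : g y y = 0 := by
  obtain ⟨c, rfl⟩ := Submodule.mem_span_singleton.1 hy
  simp [hx]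

section

open Module

variable {R M : Type*} [CommRing R] [AddCommGroup M] [Module R M]

/-- The endomorphism `h` acts on the triple `e` by the Lorentzian canonical form (IV) with
eigenvalue `lam`. The vectors `e 0`, `e 1`, `e 2` are the paper's `e₁`, `e₂`, `e₃`; that they form
a basis is not part of the definition. -/
structure IsCanonicalFormIV (h : End R M) (e : Fin 3 → M) (lam : R) : Prop where
  apply_zero : h (e 0) = lam • e 0 + e 2
  apply_one : h (e 1) = lam • e 1
  apply_two : h (e 2) = e 1 + lam • e 2

namespace IsCanonicalFormIV

variable {h : End R M} {b : Basis (Fin 3) R M} {lam : R}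

theorem toMatrix_eq (hh : IsCanonicalFormIV h b lam) :
    LinearMap.toMatrix b b h = !![lam, 0, 0; 0, lam, 1; 1, 0, lam] := by
  ext i j
  fin_cases i <;> fin_cases j <;>
    simp [LinearMap.toMatrix_apply, hh.apply_zero, hh.apply_one, hh.apply_two]

theorem trace_eq (hh : IsCanonicalFormIV h b lam) : LinearMap.trace R M h = 3 * lam := by
  rw [LinearMap.trace_eq_matrix_trace R b, hh.toMatrix_eq, Matrix.trace_fin_three_of]
  ring

theorem apply_sub_smul (hh : IsCanonicalFormIV h b lam) (x : M) :
    h x - lam • x = b.repr x 2 • b 1 + b.repr x 0 • b 2 := by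
  conv_lhs => rw [← b.sum_repr x]
  simp only [Fin.sum_univ_three, map_add, map_smul, hh.apply_zero, hh.apply_one, hh.apply_two]
  module

theorem eigenspace_eq_span (hh : IsCanonicalFormIV h b lam) :
    h.eigenspace lam = Submodule.span R {b 1} := by
  ext x
  rw [End.mem_eigenspace_iff, Submodule.mem_span_singleton]
  constructor
  · intro hx
    have hcomb : b.repr x 2 • b 1 + b.repr x 0 • b 2 = 0 := by
      rw [← hh.apply_sub_smul, hx, sub_self]
    have h0 : b.repr x 0 = 0 := by simpa using congrArg (b.repr · 2) hcomb
    have h2 : b.repr x 2 = 0 := by simpa using congrArg (b.repr · 1) hcomb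
    refine ⟨b.repr x 1, ?_⟩
    calc
      b.repr x 1 • b 1 = ∑ i, b.repr x i • b i := by
        rw [Fin.sum_univ_three, h0, h2, zero_smul, zero_smul, zero_add, add_zero]
      _ = x := b.sum_repr x
  · rintro ⟨c, rfl⟩
    rw [map_smul, hh.apply_one, smul_comm]

end IsCanonicalFormIV

theorem canonical_form_IV_impossible_general [Nontrivial R] (three_regular : IsLeftRegular (3 : R))
    {g : LinearMap.BilinForm R M} {e : Fin 3 → M}
    (hindep : LinearIndependent R e) (hspan : Submodule.span R (Set.range e) = ⊤)
    (he : g (e 1) (e 1) = 0) {h : End R M} {lam : R} (hh : IsCanonicalFormIV h e lam)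
    (htr : LinearMap.trace R M h = 0) :
    lam = 0 ∧
    (∀ ξ : M, h ξ = 0 → ξ ∈ Submodule.span R {e 1} ∧ g ξ ξ = 0) ∧
    ¬ ∃ ξ : M, h ξ = 0 ∧ g ξ ξ = 1 := by
  obtain ⟨b, rfl⟩ : ∃ b : Basis (Fin 3) R M, b = e :=
    ⟨Basis.mk hindep hspan.ge, Basis.coe_mk hindep hspan.ge⟩
  obtain rfl : lam = 0 := three_regular.mul_left_eq_zero_iff.1 (hh.trace_eq.symm.trans htr)
  have hker : LinearMap.ker h = Submodule.span R {b 1} := by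
    rw [← End.eigenspace_zero, hh.eigenspace_eq_span]
  have hnull (ξ : M) (hξ : h ξ = 0) : ξ ∈ Submodule.span R {b 1} ∧ g ξ ξ = 0 := by
    have hmem : ξ ∈ Submodule.span R {b 1} := hker ▸ LinearMap.mem_ker.2 hξ
    exact ⟨hmem, bilinForm_self_eq_zero_of_mem_span_singleton he hmem⟩
  refine ⟨rfl, hnull, ?_⟩
  rintro ⟨ξ, hξ, hunit⟩
  exact zero_ne_one ((hnull ξ hξ).2.symm.trans hunit)

end

/-- On a 3-dimensional real vector space with a symmetric bilinear form
admitting a pseudo-orthonormal basis, an endomorphism `h` in the Lorentzian canonical form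
(IV) (`he₁ = λe₁ + e₃`, `he₂ = λe₂`, `he₃ = e₂ + λe₃`) with `tr h = 0` has `λ = 0`, every
`ξ` with `hξ = 0` lies in the span of `e₂` (hence is null), and there is no `ξ` with
`hξ = 0` and `g(ξ,ξ) = 1`; so canonical form (IV) cannot occur for the tensor `h` of a
3-dimensional paracontact metric manifold. -/
theorem canonical_form_IV_impossible
    (V : Type*) [AddCommGroup V] [Module ℝ V] [FiniteDimensional ℝ V]
    (hdim : Module.finrank ℝ V = 3)
    (g : LinearMap.BilinForm ℝ V)
    (hgsymm : ∀ x y : V, g x y = g y x)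
    (e₁ e₂ e₃ : V)
    (hindep : LinearIndependent ℝ ![e₁, e₂, e₃])
    (hspan : Submodule.span ℝ {e₁, e₂, e₃} = ⊤)
    (h11 : g e₁ e₁ = 0) (h22 : g e₂ e₂ = 0) (h13 : g e₁ e₃ = 0) (h23 : g e₂ e₃ = 0)
    (h12 : g e₁ e₂ = 1) (h33 : g e₃ e₃ = 1)
    (h : V →ₗ[ℝ] V) (lam : ℝ)
    (hhe₁ : h e₁ = lam • e₁ + e₃)
    (hhe₂ : h e₂ = lam • e₂)
    (hhe₃ : h e₃ = e₂ + lam • e₃)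
    (htr : LinearMap.trace ℝ V h = 0) :
    lam = 0 ∧
    (∀ ξ : V, h ξ = 0 → ξ ∈ Submodule.span ℝ ({e₂} : Set V) ∧ g ξ ξ = 0) ∧
    ¬ ∃ ξ : V, h ξ = 0 ∧ g ξ ξ = 1 :=
  canonical_form_IV_impossible_general (IsRegular.of_ne_zero three_ne_zero).left hindep
    (by rwa [Matrix.range_cons, Matrix.range_cons_cons_empty]) h22 ⟨hhe₁, hhe₂, hhe₃⟩ htr
end

section
/- Let V be a 3-dimensional real vector space, (φ, ξ, η, g) an almost paracontact metric structure on V (n = 1), and h a g-self-adjoint endomorphism of V with hξ = 0 and h∘φ = −φ∘h. Then h∘h = (tr(h∘h)/2)·(id − η⊗ξ); equivalently h∘h − φ∘φ = ((tr(h∘h) − 2)/2)·φ∘φ. (Via Zamkovoy's formula S̃(ξ,ξ) = −2n + tr h² with n = 1, this is the identity h̃² − φ̃² = (S̃(ξ,ξ)/2)φ̃² proved in the paper separately for each of the three canonical forms of h.) -/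
/-! Since `h` anticommutes with `φ` and kills `ξ`, it takes values in the plane `ker η`, on which
`φ` is an involution. Hence `tr h = tr (φ²h) = tr (φhφ) = -tr (φ²h) = -tr h`, so `h` is a traceless
endomorphism of a plane, and Cayley–Hamilton makes `h²` a scalar there, namely half its trace. -/

section Trace

variable {R M : Type*} [CommRing R] [AddCommGroup M] [Module R M]

theorem trace_eq_zero_of_mul_eq_neg_mul [NoZeroDivisors R] [NeZero (2 : R)] {e f : Module.End R M}
    (he : e * e * f = f) (hanti : f * e = -(e * f)) : LinearMap.trace R M f = 0 := by
  have hneg : LinearMap.trace R M f = -LinearMap.trace R M f :=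
    calc LinearMap.trace R M f
        = LinearMap.trace R M (e * (e * f)) := by rw [← mul_assoc, he]
      _ = LinearMap.trace R M (e * (f * e)) := by
          rw [LinearMap.trace_mul_comm, mul_assoc]
      _ = -LinearMap.trace R M f := by rw [hanti, mul_neg, ← mul_assoc, he, map_neg]
  have htwo : 2 * LinearMap.trace R M f = 0 := by linear_combination hneg
  exact (mul_eq_zero.mp htwo).resolve_left two_ne_zero

theorem mul_self_eq_trace_smul_sub_det_smul_one [Module.Free R M] (hM : Module.finrank R M = 2)
    (f : Module.End R M) :
    f * f = LinearMap.trace R M f • f - LinearMap.det f • (1 : Module.End R M) := by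
  rcases subsingleton_or_nontrivial R with _ | _
  · have := Module.subsingleton R M
    exact Subsingleton.elim _ _
  have : Module.Finite R M := Module.finite_of_finrank_pos (by omega)
  let b := Module.finBasisOfFinrankEq R M hM
  have hchar := Matrix.aeval_self_charpoly (LinearMap.toMatrix b b f)
  apply (LinearMap.toMatrix b b).injective
  rw [LinearMap.trace_eq_matrix_trace R b, ← LinearMap.det_toMatrix b, LinearMap.toMatrix_mul,
    map_sub, map_smul, map_smul, LinearMap.toMatrix_one]
  simp only [Matrix.charpoly_fin_two, map_add, map_sub, map_mul, map_pow, Polynomial.aeval_X,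
    Polynomial.aeval_C, Algebra.algebraMap_eq_smul_one, smul_one_mul] at hchar
  rw [← sq, ← sub_eq_zero, ← hchar]
  abel

theorem mul_self_eq_half_trace_smul_one {K W : Type*} [Field K] [NeZero (2 : K)] [AddCommGroup W]
    [Module K W] (hW : Module.finrank K W = 2) {f : Module.End K W}
    (hf : LinearMap.trace K W f = 0) :
    f * f = (LinearMap.trace K W (f * f) / 2) • (1 : Module.End K W) := by
  have : FiniteDimensional K W := .of_finrank_pos (by omega)
  have hscalar : f * f = -LinearMap.det f • (1 : Module.End K W) := by
    rw [mul_self_eq_trace_smul_sub_det_smul_one hW, hf, zero_smul, zero_sub, neg_smul]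
  have htrace : LinearMap.trace K W (f * f) / 2 = -LinearMap.det f := by
    rw [hscalar, map_smul, LinearMap.trace_one, hW, smul_eq_mul, Nat.cast_ofNat,
      mul_div_cancel_right₀ _ two_ne_zero]
  rw [htrace, hscalar]

end Trace

theorem map_sub_smul_of_map_eq_zero {R M N : Type*} [Ring R] [AddCommGroup M] [Module R M]
    [AddCommGroup N] [Module R N] {f : M →ₗ[R] N} {y : M} (hy : f y = 0) (x : M) (c : R) :
    f (x - c • y) = f x := by
  rw [map_sub, map_smul, hy, smul_zero, sub_zero]

/-- An almost paracontact structure in Sato's sense, on a module: `η ξ = 1` and `φ² = id - η ⊗ ξ`,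
with no condition on the dimensions of the eigenspaces of `φ`. It is the pointwise algebra of an
almost paracontact manifold with characteristic vector field `ξ`. -/
structure IsAlmostParacontact_s10 {R M : Type*} [CommRing R] [AddCommGroup M] [Module R M]
    (φ : M →ₗ[R] M) (ξ : M) (η : M →ₗ[R] R) : Prop where
  form_apply_vector : η ξ = 1
  apply_apply (x : M) : φ (φ x) = x - η x • ξ

namespace IsAlmostParacontact_s10

section CommRing

variable {R M : Type*} [CommRing R] [AddCommGroup M] [Module R M]
  {φ h : M →ₗ[R] M} {ξ : M} {η : M →ₗ[R] R}

theorem apply_apply_of_form_eq_zero (hφ : IsAlmostParacontact_s10 φ ξ η) {x : M} (hx : η x = 0) :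
    φ (φ x) = x := by
  rw [hφ.apply_apply, hx, zero_smul, sub_zero]

theorem form_sub_smul (hφ : IsAlmostParacontact_s10 φ ξ η) (x : M) : η (x - η x • ξ) = 0 := by
  rw [map_sub, map_smul, hφ.form_apply_vector, smul_eq_mul, mul_one, sub_self]

theorem smul_apply_vector (hφ : IsAlmostParacontact_s10 φ ξ η) (x : M) :
    η x • φ ξ = η (φ x) • ξ := by
  have hcube : φ x - η x • φ ξ = φ x - η (φ x) • ξ := by
    rw [← map_smul, ← map_sub, ← hφ.apply_apply, hφ.apply_apply (φ x)]
  exact sub_right_injective hcube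

theorem apply_vector [IsReduced R] (hφ : IsAlmostParacontact_s10 φ ξ η) : φ ξ = 0 := by
  have hmul : φ ξ = η (φ ξ) • ξ := by
    simpa only [hφ.form_apply_vector, one_smul] using hφ.smul_apply_vector ξ
  have hsq : η (φ ξ) ^ 2 = 0 := by
    have hform : η (φ (φ ξ)) = 0 := by rw [hφ.apply_apply, hφ.form_sub_smul]
    rwa [hmul, map_smul, map_smul, smul_eq_mul, ← sq] at hform
  rw [hmul, pow_eq_zero_iff two_ne_zero |>.mp hsq, zero_smul]

theorem form_apply [IsReduced R] (hφ : IsAlmostParacontact_s10 φ ξ η) (x : M) : η (φ x) = 0 := by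
  have hsmul : η (φ x) • ξ = 0 := by rw [← hφ.smul_apply_vector, hφ.apply_vector, smul_zero]
  simpa only [map_smul, hφ.form_apply_vector, smul_eq_mul, mul_one, map_zero]
    using congrArg η hsmul

theorem form_apply_of_anticommute [IsReduced R] (hφ : IsAlmostParacontact_s10 φ ξ η)
    (hξ : h ξ = 0) (hanti : ∀ x, h (φ x) = -φ (h x)) (x : M) : η (h x) = 0 := by
  calc η (h x) = η (h (φ (φ x))) := by
        rw [hφ.apply_apply, map_sub_smul_of_map_eq_zero hξ]
    _ = 0 := by rw [hanti, map_neg, hφ.form_apply, neg_zero]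

theorem trace_eq_zero_of_anticommute [NoZeroDivisors R] [NeZero (2 : R)]
    (hφ : IsAlmostParacontact_s10 φ ξ η) (hξ : h ξ = 0) (hanti : ∀ x, h (φ x) = -φ (h x)) :
    LinearMap.trace R M h = 0 :=
  trace_eq_zero_of_mul_eq_neg_mul (e := φ)
    (LinearMap.ext fun x ↦
      hφ.apply_apply_of_form_eq_zero (hφ.form_apply_of_anticommute hξ hanti x))
    (LinearMap.ext hanti)

end CommRing

section Field

variable {K V : Type*} [Field K] [AddCommGroup V] [Module K V]
  {φ h : V →ₗ[K] V} {ξ : V} {η : V →ₗ[K] K}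

theorem finrank_ker_form_add_one [FiniteDimensional K V] (hφ : IsAlmostParacontact_s10 φ ξ η) :
    Module.finrank K (LinearMap.ker η) + 1 = Module.finrank K V := by
  refine Module.Dual.finrank_ker_add_one_of_ne_zero (f := η) ?_
  rintro rfl
  exact zero_ne_one hφ.form_apply_vector

theorem apply_apply_eq_half_trace_smul_of_form_eq_zero [NeZero (2 : K)]
    (hV : Module.finrank K V = 3) (hφ : IsAlmostParacontact_s10 φ ξ η) (hξ : h ξ = 0)
    (hanti : ∀ x, h (φ x) = -φ (h x)) {x : V} (hx : η x = 0) :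
    h (h x) = (LinearMap.trace K V (h ∘ₗ h) / 2) • x := by
  have : FiniteDimensional K V := .of_finrank_pos (by omega)
  have hker : Module.finrank K (LinearMap.ker η) = 2 := by
    have := hφ.finrank_ker_form_add_one
    omega
  have hmem (y : V) : h y ∈ LinearMap.ker η := hφ.form_apply_of_anticommute hξ hanti y
  let f : Module.End K (LinearMap.ker η) := h.restrict fun y _ ↦ hmem y
  have hf : LinearMap.trace K _ f = 0 := by
    rw [LinearMap.trace_restrict_eq_of_forall_mem _ h hmem,
      hφ.trace_eq_zero_of_anticommute hξ hanti]
  have hff : LinearMap.trace K _ (f * f) = LinearMap.trace K V (h ∘ₗ h) :=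
    LinearMap.trace_restrict_eq_of_forall_mem _ (h ∘ₗ h) fun y ↦ hmem (h y)
  have hsq := mul_self_eq_half_trace_smul_one hker hf
  rw [hff] at hsq
  exact congrArg Subtype.val (LinearMap.congr_fun hsq ⟨x, hx⟩)

end Field

end IsAlmostParacontact_s10

theorem h_squared_formula_dim_three_general
    {K V : Type*} [Field K] [NeZero (2 : K)] [AddCommGroup V] [Module K V]
    (hdim : Module.finrank K V = 3)
    {φ : V →ₗ[K] V} {ξ : V} {η : V →ₗ[K] K} (hφ : IsAlmostParacontact_s10 φ ξ η)
    {h : V →ₗ[K] V} (hhξ : h ξ = 0) (hanti : ∀ x : V, h (φ x) = -φ (h x)) :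
    (∀ x : V, h (h x) = (LinearMap.trace K V (h ∘ₗ h) / 2) • (x - η x • ξ)) ∧
    (∀ x : V, h (h x) - φ (φ x) = ((LinearMap.trace K V (h ∘ₗ h) - 2) / 2) • φ (φ x)) := by
  have hsq (x : V) : h (h x) = (LinearMap.trace K V (h ∘ₗ h) / 2) • (x - η x • ξ) := by
    rw [← hφ.apply_apply_eq_half_trace_smul_of_form_eq_zero hdim hhξ hanti (hφ.form_sub_smul x),
      map_sub_smul_of_map_eq_zero hhξ]
  refine ⟨hsq, fun x ↦ ?_⟩
  rw [hsq, hφ.apply_apply, sub_div, div_self two_ne_zero, sub_smul, one_smul]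

/-- On a 3-dimensional almost paracontact metric vector space, a
`g`-self-adjoint endomorphism `h` with `hξ = 0` and `hφ = −φh` satisfies
`h² = (tr(h²)/2)·(id − η⊗ξ)`, equivalently `h² − φ² = ((tr(h²) − 2)/2)·φ²`. -/
theorem h_squared_formula_dim_three
    (V : Type*) [AddCommGroup V] [Module ℝ V] [FiniteDimensional ℝ V]
    (hdim : Module.finrank ℝ V = 3)
    (φ : V →ₗ[ℝ] V) (ξ : V) (η : V →ₗ[ℝ] ℝ)
    (hηξ : η ξ = 1)
    (hφφ : ∀ x : V, φ (φ x) = x - η x • ξ)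
    (hDplus : Module.finrank ℝ (Module.End.eigenspace φ 1) = 1)
    (hDminus : Module.finrank ℝ (Module.End.eigenspace φ (-1)) = 1)
    (g : LinearMap.BilinForm ℝ V)
    (hgsymm : ∀ x y : V, g x y = g y x)
    (hgnd : ∀ x : V, (∀ y : V, g x y = 0) → x = 0)
    (hcompat : ∀ x y : V, g (φ x) (φ y) = - g x y + η x * η y)
    (h : V →ₗ[ℝ] V)
    (hsa : ∀ x y : V, g (h x) y = g x (h y))
    (hhξ : h ξ = 0)
    (hanti : ∀ x : V, h (φ x) = - φ (h x)) :
    (∀ x : V, h (h x) = (LinearMap.trace ℝ V (h ∘ₗ h) / 2) • (x - η x • ξ)) ∧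
    (∀ x : V, h (h x) - φ (φ x) = ((LinearMap.trace ℝ V (h ∘ₗ h) - 2) / 2) • φ (φ x)) :=
  h_squared_formula_dim_three_general hdim ⟨hηξ, hφφ⟩ hhξ hanti
end

section
/- Let (V, φ, ξ, η, g) be an almost contact metric vector space of dimension 2n+1 and let h be an endomorphism of V that is g-self-adjoint, anticommutes with φ, satisfies hξ = 0, and satisfies h∘h = (κ−1)·φ∘φ for a real constant κ < 1. Define φ̃ = (1/√(1−κ))·h and g̃(X, Y) = (1/√(1−κ))·g(X, (φ∘h)Y) + η(X)η(Y). Then: (a) φ̃∘φ̃ = id − η⊗ξ, φ̃ξ = 0, and η∘φ̃ = 0; (b) the eigenspaces of φ̃ in ker η for the eigenvalues +1 and −1 (namely the ±√(1−κ)-eigenspaces of h) each have dimension n; (c) g̃ is a symmetric nondegenerate bilinear form of signature (n+1, n) satisfying g̃(φ̃X, φ̃Y) = −g̃(X, Y) + η(X)η(Y); and (d) g̃(X, φ̃Y) = g(X, φY) for all X, Y. Hence (V, φ̃, ξ, η, g̃) is an almost paracontact metric vector space with the same fundamental 2-form as (φ, g). -/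
/-!
The form `g̃` is `g(·, R ·)` for the `g`-self-adjoint involution `R = λ⁻¹ φh + η ⊗ ξ`, where
`λ = √(1 - κ)`. Hence `g̃` is nondegenerate and its signature is the pair of dimensions of the
`±1`-eigenspaces of `R`. The `-1`-eigenspace of `R` is that of `λ⁻¹ φh`, and both `λ⁻¹ h` and
`λ⁻¹ φh` square to `id - η ⊗ ξ` and anticommute with `φ`. Since `φ` then exchanges their
`±1`-eigenspaces, which together span `ker η`, each of these has dimension `n`.
-/

open Module Module.End

section Eigenspaces

variable {K V : Type*} [Field K] [AddCommGroup V] [Module K V]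

theorem eigenspace_inv_smul {a : K} (ha : a ≠ 0) (f : End K V) (μ : K) :
    eigenspace (a⁻¹ • f) μ = eigenspace f (a * μ) := by
  ext x
  rw [mem_eigenspace_iff, mem_eigenspace_iff, LinearMap.smul_apply, inv_smul_eq_iff₀ ha, smul_smul]

theorem smul_apply_of_anticomm {f s : End K V} (hfs : ∀ x, f (s x) = -s (f x)) (a : K) (x : V) :
    (a • f) (s x) = -s ((a • f) x) := by
  rw [LinearMap.smul_apply, LinearMap.smul_apply, hfs, smul_neg, map_smul]

theorem apply_mem_eigenspace_neg_of_anticomm {f s : End K V} (hfs : ∀ x, f (s x) = -s (f x))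
    {μ : K} {x : V} (hx : x ∈ eigenspace f μ) : s x ∈ eigenspace f (-μ) := by
  rw [mem_eigenspace_iff] at hx ⊢
  rw [hfs, hx, map_smul, neg_smul]

theorem finrank_eigenspace_le_of_anticomm [FiniteDimensional K V] {f s : End K V}
    (hfs : ∀ x, f (s x) = -s (f x)) {μ : K} (hs : Disjoint (eigenspace f μ) (LinearMap.ker s)) :
    finrank K (eigenspace f μ) ≤ finrank K (eigenspace f (-μ)) :=
  LinearMap.finrank_le_finrank_of_injective
    (f := s.restrict fun _ => apply_mem_eigenspace_neg_of_anticomm hfs)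
    ((LinearMap.injective_restrict_iff _).2 hs)

variable [NeZero (2 : K)]

theorem disjoint_eigenspace_neg (f : End K V) {μ : K} (hμ : μ ≠ 0) :
    Disjoint (eigenspace f μ) (eigenspace f (-μ)) :=
  disjoint_genEigenspace f
    (fun h => mul_ne_zero (two_ne_zero (α := K)) hμ (by linear_combination h)) 1 1

theorem eigenspace_sup_eigenspace_neg (f : End K V) {μ : K} (hμ : μ ≠ 0) :
    eigenspace f μ ⊔ eigenspace f (-μ) = eigenspace (f * f) (μ * μ) := by
  apply le_antisymm
  · refine sup_le (fun x hx => ?_) fun x hx => ?_ <;> rw [mem_eigenspace_iff] at hx ⊢ <;>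
      simp only [Module.End.mul_apply, hx, map_smul, smul_smul, neg_mul_neg]
  · intro x hx
    replace hx : f (f x) = (μ * μ) • x := mem_eigenspace_iff.1 hx
    have hplus : f x + μ • x ∈ eigenspace f μ := by
      rw [mem_eigenspace_iff, map_add, map_smul, hx]; module
    have hminus : f x - μ • x ∈ eigenspace f (-μ) := by
      rw [mem_eigenspace_iff, map_sub, map_smul, hx]; module
    have hsplit : x = (2 * μ)⁻¹ • ((f x + μ • x) - (f x - μ • x)) := by
      rw [eq_inv_smul_iff₀ (mul_ne_zero two_ne_zero hμ)]; module
    rw [hsplit]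
    exact Submodule.smul_mem _ _ (sub_mem (Submodule.mem_sup_left hplus)
      (Submodule.mem_sup_right hminus))

theorem finrank_eigenspace_add_finrank_eigenspace_neg [FiniteDimensional K V] (f : End K V)
    {μ : K} (hμ : μ ≠ 0) :
    finrank K (eigenspace f μ) + finrank K (eigenspace f (-μ)) =
      finrank K (eigenspace (f * f) (μ * μ)) := by
  rw [← Submodule.finrank_sup_add_finrank_inf_eq, (disjoint_eigenspace_neg f hμ).eq_bot,
    finrank_bot, add_zero, eigenspace_sup_eigenspace_neg f hμ]

theorem finrank_eigenspace_one_add_finrank_eigenspace_neg_one [FiniteDimensional K V]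
    {f : End K V} (hf : f * f = 1) :
    finrank K (eigenspace f 1) + finrank K (eigenspace f (-1)) = finrank K V := by
  have htop : eigenspace (f * f) (1 * 1) = ⊤ := by
    ext x
    simp only [hf, mul_one, mem_eigenspace_iff, Module.End.one_apply, one_smul, Submodule.mem_top]
  rw [finrank_eigenspace_add_finrank_eigenspace_neg f one_ne_zero, htop, finrank_top]

end Eigenspaces

/-- `ψ² = c (id - η ⊗ ξ)` with `η ξ = 1`: for `c = -1` this is an almost contact structure, for
`c = 1` an almost paracontact structure without the condition on the dimensions of the
`±1`-eigenspaces. -/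
structure IsAlmostContactOfType {K V : Type*} [Field K] [AddCommGroup V] [Module K V]
    (c : K) (ψ : End K V) (ξ : V) (η : Dual K V) : Prop where
  eta_xi : η ξ = 1
  apply_apply : ∀ x, ψ (ψ x) = c • (x - η x • ξ)

namespace IsAlmostContactOfType

variable {K V : Type*} [Field K] [AddCommGroup V] [Module K V]
  {c d : K} {ψ χ : End K V} {ξ : V} {η : Dual K V}

theorem xi_ne_zero (hψ : IsAlmostContactOfType c ψ ξ η) : ξ ≠ 0 := by
  rintro rfl
  exact zero_ne_one ((map_zero η).symm.trans hψ.eta_xi)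

theorem eta_ne_zero (hψ : IsAlmostContactOfType c ψ ξ η) : η ≠ 0 := by
  rintro rfl
  exact zero_ne_one hψ.eta_xi

theorem eta_apply_apply (hψ : IsAlmostContactOfType c ψ ξ η) (x : V) : η (ψ (ψ x)) = 0 := by
  rw [hψ.apply_apply, map_smul, map_sub, map_smul, hψ.eta_xi, smul_eq_mul (η x), mul_one,
    sub_self, smul_zero]

theorem apply_xi (hψ : IsAlmostContactOfType c ψ ξ η) (hc : c ≠ 0) : ψ ξ = 0 := by
  have hψψξ : ψ (ψ ξ) = 0 := by
    rw [hψ.apply_apply, hψ.eta_xi, one_smul, sub_self, smul_zero]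
  have hψξ : ψ ξ = η (ψ ξ) • ξ := by
    have hcube := hψ.apply_apply (ψ ξ)
    rw [hψψξ, map_zero] at hcube
    exact sub_eq_zero.1 ((smul_eq_zero.1 hcube.symm).resolve_left hc)
  have hsq : η (ψ ξ) • ψ ξ = 0 := by rw [← map_smul, ← hψξ, hψψξ]
  rcases smul_eq_zero.1 hsq with hη | hψξ0
  · rw [hψξ, hη, zero_smul]
  · exact hψξ0

theorem eta_apply (hψ : IsAlmostContactOfType c ψ ξ η) (hc : c ≠ 0) (x : V) : η (ψ x) = 0 := by
  -- Compare the two ways of expanding `ψ³ x`.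
  have hcube : c • (ψ x - η (ψ x) • ξ) = c • ψ x := by
    rw [← hψ.apply_apply, hψ.apply_apply x, map_smul, map_sub, map_smul, hψ.apply_xi hc,
      smul_zero, sub_zero]
  exact (smul_eq_zero.1 (sub_eq_self.1 (smul_right_injective V hc hcube))).resolve_right
    hψ.xi_ne_zero

theorem smul (hψ : IsAlmostContactOfType c ψ ξ η) (a : K) :
    IsAlmostContactOfType (a ^ 2 * c) (a • ψ) ξ η where
  eta_xi := hψ.eta_xi
  apply_apply x := by
    rw [LinearMap.smul_apply, LinearMap.smul_apply, map_smul, hψ.apply_apply]; module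

theorem inv_smul {a : K} (ha : a ≠ 0) (hψ : IsAlmostContactOfType (a ^ 2) ψ ξ η) :
    IsAlmostContactOfType 1 (a⁻¹ • ψ) ξ η := by
  have hscaled := hψ.smul a⁻¹
  rwa [inv_pow, inv_mul_cancel₀ (pow_ne_zero 2 ha)] at hscaled

theorem mul_of_anticomm (hψ : IsAlmostContactOfType c ψ ξ η) (hχ : IsAlmostContactOfType d χ ξ η)
    (hχψ : ∀ x, χ (ψ x) = -ψ (χ x)) : IsAlmostContactOfType (-(c * d)) (ψ * χ) ξ η where
  eta_xi := hψ.eta_xi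
  apply_apply x := by
    rw [Module.End.mul_apply, Module.End.mul_apply, hχψ, map_neg, hψ.apply_apply,
      hχ.eta_apply_apply, hχ.apply_apply]
    module

theorem of_apply_apply_eq_smul (hψ : IsAlmostContactOfType c ψ ξ η)
    (hχ : ∀ x, χ (χ x) = d • ψ (ψ x)) : IsAlmostContactOfType (d * c) χ ξ η where
  eta_xi := hψ.eta_xi
  apply_apply x := by rw [hχ, hψ.apply_apply, smul_smul]

theorem eigenspace_le_ker_eta (hψ : IsAlmostContactOfType c ψ ξ η) (hc : c ≠ 0) {μ : K}
    (hμ : μ ≠ 0) : eigenspace ψ μ ≤ LinearMap.ker η := by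
  intro x hx
  have hηx := hψ.eta_apply hc x
  rw [mem_eigenspace_iff.1 hx, map_smul] at hηx
  exact (smul_eq_zero.1 hηx).resolve_left hμ

theorem eigenspace_mul_self (hψ : IsAlmostContactOfType c ψ ξ η) (hc : c ≠ 0) :
    eigenspace (ψ * ψ) c = LinearMap.ker η := by
  ext x
  rw [mem_eigenspace_iff, Module.End.mul_apply, hψ.apply_apply, smul_right_inj hc, sub_eq_self,
    smul_eq_zero_iff_left hψ.xi_ne_zero, LinearMap.mem_ker]

theorem disjoint_ker_eta_ker (hψ : IsAlmostContactOfType c ψ ξ η) (hc : c ≠ 0) :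
    Disjoint (LinearMap.ker η) (LinearMap.ker ψ) := by
  rw [Submodule.disjoint_def]
  intro x hηx hψx
  have hψψx := hψ.apply_apply x
  rw [LinearMap.mem_ker.1 hηx, LinearMap.mem_ker.1 hψx, map_zero, zero_smul, sub_zero] at hψψx
  exact (smul_eq_zero.1 hψψx.symm).resolve_left hc

theorem finrank_eigenspace_neg_of_anticomm [FiniteDimensional K V]
    (hψ : IsAlmostContactOfType c ψ ξ η) (hc : c ≠ 0) (hχ : IsAlmostContactOfType d χ ξ η)
    (hd : d ≠ 0) (hψχ : ∀ x, ψ (χ x) = -χ (ψ x)) {μ : K} (hμ : μ ≠ 0) :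
    finrank K (eigenspace ψ (-μ)) = finrank K (eigenspace ψ μ) := by
  have hle {ν : K} (hν : ν ≠ 0) : finrank K (eigenspace ψ ν) ≤ finrank K (eigenspace ψ (-ν)) :=
    finrank_eigenspace_le_of_anticomm hψχ
      ((hχ.disjoint_ker_eta_ker hd).mono_left (hψ.eigenspace_le_ker_eta hc hν))
  exact le_antisymm ((hle (neg_ne_zero.2 hμ)).trans_eq (by rw [neg_neg])) (hle hμ)

theorem two_mul_finrank_eigenspace_add_one_of_anticomm [NeZero (2 : K)] [FiniteDimensional K V]
    (hψ : IsAlmostContactOfType c ψ ξ η) (hc : c ≠ 0) (hχ : IsAlmostContactOfType d χ ξ η)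
    (hd : d ≠ 0) (hψχ : ∀ x, ψ (χ x) = -χ (ψ x)) {μ : K} (hμ : μ * μ = c) :
    2 * finrank K (eigenspace ψ μ) + 1 = finrank K V := by
  have hμ0 : μ ≠ 0 := left_ne_zero_of_mul (hμ ▸ hc)
  have hsum := finrank_eigenspace_add_finrank_eigenspace_neg ψ hμ0
  rw [hψ.finrank_eigenspace_neg_of_anticomm hc hχ hd hψχ hμ0, hμ, hψ.eigenspace_mul_self hc] at hsum
  rw [two_mul, hsum, Dual.finrank_ker_add_one_of_ne_zero hψ.eta_ne_zero]

theorem mul_self_add_smulRight (hψ : IsAlmostContactOfType 1 ψ ξ η) :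
    (ψ + η.smulRight ξ) * (ψ + η.smulRight ξ) = 1 := by
  ext x
  simp only [Module.End.mul_apply, LinearMap.add_apply, LinearMap.smulRight_apply, map_add,
    map_smul, hψ.apply_apply, hψ.apply_xi one_ne_zero, hψ.eta_apply one_ne_zero, hψ.eta_xi,
    Module.End.one_apply]
  module

theorem eigenspace_add_smulRight (hψ : IsAlmostContactOfType c ψ ξ η) (hc : c ≠ 0) {μ : K}
    (hμ : μ ≠ 0) (hμ1 : μ ≠ 1) : eigenspace (ψ + η.smulRight ξ) μ = eigenspace ψ μ := by
  ext x
  suffices hη : x ∈ eigenspace (ψ + η.smulRight ξ) μ → η x = 0 by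
    constructor <;> intro hx
    · simpa [mem_eigenspace_iff, hη hx] using hx
    · have hηx : η x = 0 := hψ.eigenspace_le_ker_eta hc hμ hx
      simpa [mem_eigenspace_iff, hηx] using hx
  intro hx
  have hηx : η x = μ * η x := by
    simpa [hψ.eta_apply hc, hψ.eta_xi] using congrArg η (mem_eigenspace_iff.1 hx)
  by_contra hne
  exact hμ1 ((mul_eq_right₀ hne).1 hηx.symm)

end IsAlmostContactOfType

/-- `p` and `m` are the largest dimensions of subspaces on which the function `q`, thought of as a
quadratic form, is positive, respectively negative, away from `0`. -/
structure HasSignature {K V : Type*} [Field K] [LinearOrder K] [AddCommGroup V] [Module K V]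
    (q : V → K) (p m : ℕ) : Prop where
  exists_pos : ∃ P : Submodule K V, finrank K P = p ∧ ∀ x ∈ P, x ≠ 0 → 0 < q x
  finrank_le_of_pos : ∀ P : Submodule K V, (∀ x ∈ P, x ≠ 0 → 0 < q x) → finrank K P ≤ p
  exists_neg : ∃ N : Submodule K V, finrank K N = m ∧ ∀ x ∈ N, x ≠ 0 → q x < 0
  finrank_le_of_neg : ∀ N : Submodule K V, (∀ x ∈ N, x ≠ 0 → q x < 0) → finrank K N ≤ m

section Signature

variable {K V : Type*} [Field K] [LinearOrder K] [AddCommGroup V] [Module K V]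

theorem finrank_add_finrank_le_of_pos_of_neg [FiniteDimensional K V] {q : V → K}
    {P N : Submodule K V} (hP : ∀ x ∈ P, x ≠ 0 → 0 < q x) (hN : ∀ x ∈ N, x ≠ 0 → q x < 0) :
    finrank K P + finrank K N ≤ finrank K V := by
  apply Submodule.finrank_add_finrank_le_of_disjoint
  rw [Submodule.disjoint_def]
  intro x hxP hxN
  by_contra hx
  exact lt_asymm (hP x hxP hx) (hN x hxN hx)

theorem hasSignature_of_finrank_add_eq [FiniteDimensional K V] {q : V → K} {P N : Submodule K V}
    (hP : ∀ x ∈ P, x ≠ 0 → 0 < q x) (hN : ∀ x ∈ N, x ≠ 0 → q x < 0)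
    (hPN : finrank K P + finrank K N = finrank K V) :
    HasSignature q (finrank K P) (finrank K N) where
  exists_pos := ⟨P, rfl, hP⟩
  finrank_le_of_pos Q hQ := by
    have := finrank_add_finrank_le_of_pos_of_neg hQ hN
    lia
  exists_neg := ⟨N, rfl, hN⟩
  finrank_le_of_neg Q hQ := by
    have := finrank_add_finrank_le_of_pos_of_neg hP hQ
    lia

theorem hasSignature_of_involution [IsStrictOrderedRing K] [FiniteDimensional K V]
    {g : LinearMap.BilinForm K V} (hg : ∀ x, x ≠ 0 → 0 < g x x) {R : End K V} (hR : R * R = 1) :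
    HasSignature (fun x => g x (R x))
      (finrank K (eigenspace R 1)) (finrank K (eigenspace R (-1))) := by
  apply hasSignature_of_finrank_add_eq
  · intro x hx hx0
    rw [mem_eigenspace_iff.1 hx, one_smul]
    exact hg x hx0
  · intro x hx hx0
    rw [mem_eigenspace_iff.1 hx, neg_one_smul, map_neg]
    exact neg_neg_of_pos (hg x hx0)
  · exact finrank_eigenspace_one_add_finrank_eigenspace_neg_one hR

theorem eq_zero_of_forall_apply_involution_eq_zero {g : LinearMap.BilinForm K V}
    (hg : ∀ x, x ≠ 0 → 0 < g x x) {R : End K V} (hR : R * R = 1) {x : V}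
    (hx : ∀ y, g x (R y) = 0) : x = 0 := by
  by_contra hx0
  have hRx : R (R x) = x := LinearMap.congr_fun hR x
  exact (hg x hx0).ne' ((congrArg (g x) hRx).symm.trans (hx (R x)))

end Signature

/-- Almost contact metric vector space; `φ` is then skew-adjoint for `g`, see `metric_skew`. -/
structure IsAlmostContactMetric {K V : Type*} [Field K] [LinearOrder K] [AddCommGroup V]
    [Module K V] (φ : End K V) (ξ : V) (η : Dual K V) (g : LinearMap.BilinForm K V) : Prop
    extends IsAlmostContactOfType (-1) φ ξ η where
  symm : ∀ x y, g x y = g y x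
  pos : ∀ x, x ≠ 0 → 0 < g x x
  compat : ∀ x y, g (φ x) (φ y) = g x y - η x * η y

namespace IsAlmostContactMetric

variable {K V : Type*} [Field K] [LinearOrder K] [AddCommGroup V] [Module K V]
  {φ h : End K V} {ξ : V} {η : Dual K V} {g : LinearMap.BilinForm K V}

theorem metric_xi (hφ : IsAlmostContactMetric φ ξ η g) (x : V) : g x ξ = η x := by
  have hcompat := hφ.compat x ξ
  rw [hφ.apply_xi (neg_ne_zero.2 one_ne_zero), map_zero, hφ.eta_xi, mul_one] at hcompat
  exact sub_eq_zero.1 hcompat.symm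

theorem metric_skew (hφ : IsAlmostContactMetric φ ξ η g) (x y : V) :
    g (φ x) y = -g x (φ y) := by
  have hηφ := hφ.eta_apply (neg_ne_zero.2 one_ne_zero)
  have hcompat := hφ.compat x (φ y)
  rw [hφ.apply_apply, map_smul, map_sub, map_smul, hφ.metric_xi, hηφ, hηφ] at hcompat
  simp only [smul_eq_mul, mul_zero, sub_zero, neg_one_mul] at hcompat
  rw [← hcompat, neg_neg]

theorem isSelfAdjoint_mul_of_anticomm (hφ : IsAlmostContactMetric φ ξ η g)
    (hsa : g.IsSelfAdjoint h) (hanti : ∀ x, h (φ x) = -φ (h x)) : g.IsSelfAdjoint (φ * h) := by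
  intro x y
  calc g (φ (h x)) y = -g x (h (φ y)) := by rw [hφ.metric_skew, hsa]
    _ = g x (φ (h y)) := by rw [hanti, map_neg, neg_neg]

theorem isSelfAdjoint_smulRight (hφ : IsAlmostContactMetric φ ξ η g) :
    g.IsSelfAdjoint (η.smulRight ξ) := by
  intro x y
  simp only [LinearMap.smulRight_apply, map_smul, LinearMap.smul_apply, smul_eq_mul,
    hφ.symm ξ, hφ.metric_xi, mul_comm]

end IsAlmostContactMetric

/-- The endomorphism `R = λ⁻¹ φh + η ⊗ ξ` representing the paracontact metric `g̃ = g(·, R ·)`. -/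
def canonicalInvolution {K V : Type*} [Field K] [AddCommGroup V] [Module K V]
    (lam : K) (φ h : End K V) (ξ : V) (η : Dual K V) : End K V :=
  lam⁻¹ • (φ * h) + η.smulRight ξ

section CanonicalInvolution

variable {K V : Type*} [Field K] [AddCommGroup V] [Module K V]
  {lam : K} {φ h : End K V} {ξ : V} {η : Dual K V}

theorem isAlmostContactOfType_inv_smul_mul (hφ : IsAlmostContactOfType (-1) φ ξ η)
    (hh : IsAlmostContactOfType (lam ^ 2) h ξ η) (hlam : lam ≠ 0)
    (hanti : ∀ x, h (φ x) = -φ (h x)) : IsAlmostContactOfType 1 (lam⁻¹ • (φ * h)) ξ η := by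
  have hφh := hφ.mul_of_anticomm hh hanti
  rw [neg_one_mul, neg_neg] at hφh
  exact hφh.inv_smul hlam

theorem canonicalInvolution_mul_self (hφ : IsAlmostContactOfType (-1) φ ξ η)
    (hh : IsAlmostContactOfType (lam ^ 2) h ξ η) (hlam : lam ≠ 0)
    (hanti : ∀ x, h (φ x) = -φ (h x)) :
    canonicalInvolution lam φ h ξ η * canonicalInvolution lam φ h ξ η = 1 :=
  (isAlmostContactOfType_inv_smul_mul hφ hh hlam hanti).mul_self_add_smulRight

theorem canonicalInvolution_apply_inv_smul (hφ : IsAlmostContactOfType (-1) φ ξ η)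
    (hh : IsAlmostContactOfType (lam ^ 2) h ξ η) (hlam : lam ≠ 0) (x : V) :
    canonicalInvolution lam φ h ξ η (lam⁻¹ • h x) = φ x := by
  have hsq : lam⁻¹ • h (lam⁻¹ • h x) = x - η x • ξ :=
    ((hh.inv_smul hlam).apply_apply x).trans (one_smul K _)
  have hη : η (lam⁻¹ • h x) = 0 := (hh.inv_smul hlam).eta_apply one_ne_zero x
  calc canonicalInvolution lam φ h ξ η (lam⁻¹ • h x)
      = φ (lam⁻¹ • h (lam⁻¹ • h x)) + η (lam⁻¹ • h x) • ξ := by rw [map_smul φ]; rfl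
    _ = φ x := by
      rw [hsq, hη, zero_smul, add_zero, map_sub, map_smul,
        hφ.apply_xi (neg_ne_zero.2 one_ne_zero), smul_zero, sub_zero]

theorem two_mul_finrank_eigenspace_canonicalInvolution_neg_one_add_one [NeZero (2 : K)]
    [FiniteDimensional K V] (hφ : IsAlmostContactOfType (-1) φ ξ η)
    (hh : IsAlmostContactOfType (lam ^ 2) h ξ η) (hlam : lam ≠ 0)
    (hanti : ∀ x, h (φ x) = -φ (h x)) :
    2 * finrank K (eigenspace (canonicalInvolution lam φ h ξ η) (-1)) + 1 = finrank K V := by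
  have hT := isAlmostContactOfType_inv_smul_mul hφ hh hlam hanti
  have hφhφ (x : V) : (φ * h) (φ x) = -φ ((φ * h) x) := by
    rw [Module.End.mul_apply, Module.End.mul_apply, hanti, map_neg]
  have hne : (-1 : K) ≠ 1 := fun h => two_ne_zero (α := K) (by linear_combination -h)
  have hneg : (-1 : K) ≠ 0 := neg_ne_zero.2 one_ne_zero
  rw [canonicalInvolution, hT.eigenspace_add_smulRight one_ne_zero hneg hne]
  exact hT.two_mul_finrank_eigenspace_add_one_of_anticomm one_ne_zero hφ hneg
    (smul_apply_of_anticomm hφhφ _) (neg_mul_neg 1 1 |>.trans (one_mul 1))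

theorem apply_canonicalInvolution [LinearOrder K] {g : LinearMap.BilinForm K V}
    (hφ : IsAlmostContactMetric φ ξ η g) (x y : V) :
    g x (canonicalInvolution lam φ h ξ η y) = lam⁻¹ * g x (φ (h y)) + η x * η y := by
  simp only [canonicalInvolution, LinearMap.add_apply, LinearMap.smul_apply, Module.End.mul_apply,
    LinearMap.smulRight_apply, map_add, map_smul, smul_eq_mul, hφ.metric_xi, mul_comm (η y)]

theorem isSelfAdjoint_canonicalInvolution [LinearOrder K] {g : LinearMap.BilinForm K V}
    (hφ : IsAlmostContactMetric φ ξ η g) (hsa : g.IsSelfAdjoint h)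
    (hanti : ∀ x, h (φ x) = -φ (h x)) : g.IsSelfAdjoint (canonicalInvolution lam φ h ξ η) :=
  ((hφ.isSelfAdjoint_mul_of_anticomm hsa hanti).smul lam⁻¹).add hφ.isSelfAdjoint_smulRight

theorem apply_inv_smul_canonicalInvolution_inv_smul [LinearOrder K] {g : LinearMap.BilinForm K V}
    (hφ : IsAlmostContactMetric φ ξ η g) (hsa : g.IsSelfAdjoint h)
    (hh : IsAlmostContactOfType (lam ^ 2) h ξ η) (hlam : lam ≠ 0)
    (hanti : ∀ x, h (φ x) = -φ (h x)) (x y : V) :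
    g (lam⁻¹ • h x) (canonicalInvolution lam φ h ξ η (lam⁻¹ • h y)) =
      -g x (canonicalInvolution lam φ h ξ η y) + η x * η y := by
  calc g (lam⁻¹ • h x) (canonicalInvolution lam φ h ξ η (lam⁻¹ • h y))
      = lam⁻¹ * g x (h (φ y)) := by
        rw [canonicalInvolution_apply_inv_smul hφ.toIsAlmostContactOfType hh hlam, map_smul,
          LinearMap.smul_apply, hsa, smul_eq_mul]
    _ = -g x (canonicalInvolution lam φ h ξ η y) + η x * η y := by
        rw [apply_canonicalInvolution hφ, hanti, map_neg]; ring

theorem hasSignature_canonicalInvolution [LinearOrder K] [IsStrictOrderedRing K]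
    {g : LinearMap.BilinForm K V} {n : ℕ} (hdim : finrank K V = 2 * n + 1)
    (hφ : IsAlmostContactMetric φ ξ η g) (hh : IsAlmostContactOfType (lam ^ 2) h ξ η)
    (hlam : lam ≠ 0) (hanti : ∀ x, h (φ x) = -φ (h x)) :
    HasSignature (fun x => g x (canonicalInvolution lam φ h ξ η x)) (n + 1) n := by
  have : FiniteDimensional K V := Module.finite_of_finrank_eq_succ hdim
  have hR := canonicalInvolution_mul_self hφ.toIsAlmostContactOfType hh hlam hanti
  have hsum := finrank_eigenspace_one_add_finrank_eigenspace_neg_one hR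
  have hneg := two_mul_finrank_eigenspace_canonicalInvolution_neg_one_add_one
    hφ.toIsAlmostContactOfType hh hlam hanti
  convert hasSignature_of_involution hφ.pos hR using 1 <;> lia

end CanonicalInvolution

theorem canonical_paracontact_structure_from_contact_general
    {K V : Type*} [Field K] [LinearOrder K] [IsStrictOrderedRing K] [AddCommGroup V] [Module K V]
    {n : ℕ} (hdim : finrank K V = 2 * n + 1)
    {φ : V →ₗ[K] V} {ξ : V} {η : V →ₗ[K] K} {g : LinearMap.BilinForm K V}
    (hφ : IsAlmostContactMetric φ ξ η g)
    {h : V →ₗ[K] V} (hsa : g.IsSelfAdjoint h) (hanti : ∀ x, h (φ x) = -φ (h x))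
    {lam : K} (hlam : lam ≠ 0) (hhφ : ∀ x, h (h x) = -lam ^ 2 • φ (φ x))
    {φt : V →ₗ[K] V} (hφt : ∀ x, φt x = lam⁻¹ • h x)
    {gt : V → V → K} (hgt : ∀ x y, gt x y = lam⁻¹ * g x (φ (h y)) + η x * η y) :
    (∀ x, φt (φt x) = x - η x • ξ) ∧
    φt ξ = 0 ∧
    (∀ x, η (φt x) = 0) ∧
    eigenspace φt 1 = eigenspace h lam ∧
    eigenspace φt (-1) = eigenspace h (-lam) ∧
    finrank K (eigenspace φt 1) = n ∧
    finrank K (eigenspace φt (-1)) = n ∧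
    (∀ x y, gt x y = gt y x) ∧
    (∀ x, (∀ y, gt x y = 0) → x = 0) ∧
    (∃ P : Submodule K V, finrank K P = n + 1 ∧ ∀ x ∈ P, x ≠ 0 → 0 < gt x x) ∧
    (∀ P : Submodule K V, (∀ x ∈ P, x ≠ 0 → 0 < gt x x) → finrank K P ≤ n + 1) ∧
    (∃ N : Submodule K V, finrank K N = n ∧ ∀ x ∈ N, x ≠ 0 → gt x x < 0) ∧
    (∀ N : Submodule K V, (∀ x ∈ N, x ≠ 0 → gt x x < 0) → finrank K N ≤ n) ∧
    (∀ x y, gt (φt x) (φt y) = -gt x y + η x * η y) ∧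
    (∀ x y, gt x (φt y) = g x (φ y)) := by
  have : FiniteDimensional K V := Module.finite_of_finrank_eq_succ hdim
  have hcontact := hφ.toIsAlmostContactOfType
  have hh : IsAlmostContactOfType (lam ^ 2) h ξ η := by
    simpa using hcontact.of_apply_apply_eq_smul hhφ
  obtain rfl : φt = lam⁻¹ • h := LinearMap.ext hφt
  obtain rfl : gt = fun x y => g x (canonicalInvolution lam φ h ξ η y) := by
    ext x y; rw [hgt, apply_canonicalInvolution hφ]
  have hψ := hh.inv_smul hlam
  have hfinrank {μ : K} (hμ : μ * μ = 1) : finrank K (eigenspace (lam⁻¹ • h) μ) = n := by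
    have := hψ.two_mul_finrank_eigenspace_add_one_of_anticomm one_ne_zero hcontact
      (neg_ne_zero.2 one_ne_zero) (smul_apply_of_anticomm hanti _) hμ
    lia
  have hR := canonicalInvolution_mul_self hcontact hh hlam hanti
  obtain ⟨hpos, hle_pos, hneg, hle_neg⟩ := hasSignature_canonicalInvolution hdim hφ hh hlam hanti
  exact ⟨fun x => (hψ.apply_apply x).trans (one_smul K _), hψ.apply_xi one_ne_zero,
    hψ.eta_apply one_ne_zero, by rw [eigenspace_inv_smul hlam, mul_one],
    by rw [eigenspace_inv_smul hlam, mul_neg_one], hfinrank (one_mul 1), hfinrank (by ring),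
    fun x y => (hφ.symm _ _).trans (isSelfAdjoint_canonicalInvolution hφ hsa hanti y x),
    fun _ => eq_zero_of_forall_apply_involution_eq_zero hφ.pos hR, hpos, hle_pos, hneg, hle_neg,
    apply_inv_smul_canonicalInvolution_inv_smul hφ hsa hh hlam hanti,
    fun x y => congrArg (g x) (canonicalInvolution_apply_inv_smul hcontact hh hlam y)⟩

/-- Let `(V, φ, ξ, η, g)` be an almost contact metric vector space of
dimension `2n+1` and let `h` be `g`-self-adjoint, anticommuting with `φ`, with `hξ = 0` and
`h² = (κ−1)φ²` for a constant `κ < 1`. Then `φ̃ = (1/√(1−κ))h` and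
`g̃ = (1/√(1−κ))g(·, φh·) + η⊗η` define an almost paracontact metric structure on `V` with
the same fundamental 2-form: `φ̃² = id − η⊗ξ`, `φ̃ξ = 0`, `η∘φ̃ = 0`, the `±1`-eigenspaces
of `φ̃` (the `±√(1−κ)`-eigenspaces of `h`) have dimension `n`, `g̃` is symmetric
nondegenerate of signature `(n+1, n)` with `g̃(φ̃X, φ̃Y) = −g̃(X,Y) + η(X)η(Y)`, and
`g̃(X, φ̃Y) = g(X, φY)`. -/
theorem canonical_paracontact_structure_from_contact
    (n : ℕ) (V : Type*) [AddCommGroup V] [Module ℝ V] [FiniteDimensional ℝ V]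
    (hdim : Module.finrank ℝ V = 2 * n + 1)
    (φ : V →ₗ[ℝ] V) (ξ : V) (η : V →ₗ[ℝ] ℝ)
    (hηξ : η ξ = 1)
    (hφφ : ∀ x : V, φ (φ x) = -x + η x • ξ)
    (g : LinearMap.BilinForm ℝ V)
    (hgsymm : ∀ x y : V, g x y = g y x)
    (hgpos : ∀ x : V, x ≠ 0 → 0 < g x x)
    (hcompat : ∀ x y : V, g (φ x) (φ y) = g x y - η x * η y)
    (hgskew : ∀ x y : V, g x (φ y) = - g (φ x) y)
    (h : V →ₗ[ℝ] V)
    (hsa : ∀ x y : V, g (h x) y = g x (h y))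
    (hanti : ∀ x : V, h (φ x) = - φ (h x))
    (hhξ : h ξ = 0)
    (κ : ℝ) (hκ : κ < 1)
    (hh : ∀ x : V, h (h x) = (κ - 1) • φ (φ x))
    (lam : ℝ) (hlam : lam = Real.sqrt (1 - κ))
    (φt : V →ₗ[ℝ] V) (hφt : ∀ x : V, φt x = lam⁻¹ • h x)
    (gt : V → V → ℝ)
    (hgt : ∀ x y : V, gt x y = lam⁻¹ * g x (φ (h y)) + η x * η y) :
    -- (a)
    (∀ x : V, φt (φt x) = x - η x • ξ) ∧
    φt ξ = 0 ∧
    (∀ x : V, η (φt x) = 0) ∧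
    -- (b)
    Module.End.eigenspace φt 1 = Module.End.eigenspace h lam ∧
    Module.End.eigenspace φt (-1) = Module.End.eigenspace h (-lam) ∧
    Module.finrank ℝ (Module.End.eigenspace φt 1) = n ∧
    Module.finrank ℝ (Module.End.eigenspace φt (-1)) = n ∧
    -- (c)
    (∀ x y : V, gt x y = gt y x) ∧
    (∀ x : V, (∀ y : V, gt x y = 0) → x = 0) ∧
    (∃ P : Submodule ℝ V, Module.finrank ℝ P = n + 1 ∧ ∀ x ∈ P, x ≠ 0 → 0 < gt x x) ∧
    (∀ P : Submodule ℝ V, (∀ x ∈ P, x ≠ 0 → 0 < gt x x) → Module.finrank ℝ P ≤ n + 1) ∧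
    (∃ N : Submodule ℝ V, Module.finrank ℝ N = n ∧ ∀ x ∈ N, x ≠ 0 → gt x x < 0) ∧
    (∀ N : Submodule ℝ V, (∀ x ∈ N, x ≠ 0 → gt x x < 0) → Module.finrank ℝ N ≤ n) ∧
    (∀ x y : V, gt (φt x) (φt y) = - gt x y + η x * η y) ∧
    -- (d)
    (∀ x y : V, gt x (φt y) = g x (φ y)) := by
  have hκ' : 0 < 1 - κ := sub_pos.2 hκ
  have hlam0 : lam ≠ 0 := hlam ▸ (Real.sqrt_pos.2 hκ').ne'
  have hsq : -lam ^ 2 = κ - 1 := by rw [hlam, Real.sq_sqrt hκ'.le, neg_sub]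
  exact canonical_paracontact_structure_from_contact_general hdim
    ⟨⟨hηξ, fun x => by rw [hφφ]; module⟩, hgsymm, hgpos, hcompat⟩ hsa hanti hlam0
    (fun x => by rw [hh, hsq]) hφt hgt
end

section
/- Let (V, φ, ξ, η, g) be an almost contact metric vector space of dimension 2n+1, let h be g-self-adjoint with h∘φ = −φ∘h, hξ = 0, and h∘h = (κ−1)·φ∘φ for a real constant κ < 1, and let μ be a real number. Set λ = √(1−κ), φ̃ = (1/λ)·h, g̃(X,Y) = (1/λ)·g(X, (φ∘h)Y) + η(X)η(Y), and define h̃ = (1/(2λ))·((2−μ)·φ∘h + 2(1−κ)·φ). Then: h̃ξ = 0; h̃∘φ̃ = −φ̃∘h̃; h̃ is g̃-self-adjoint (g̃(h̃X, Y) = g̃(X, h̃Y)); tr h̃ = 0; and h̃∘h̃ = (1+κ̃)·(id − η⊗ξ) where κ̃ = (1 − μ/2)² + κ − 2. -/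
/-!
Put `p = id − η ⊗ ξ` and `λ² = 1 − κ`. The hypotheses say that `φ² = −p`, `h² = λ² p` and
`hφ = −φh`, so on `ker η` the maps `φ`, `h`, `φh` multiply like quaternion units up to sign and
scale, and `h̃ = a φh + b φ` with `a = (2 − μ) / (2λ)`, `b = λ` is a combination of the two that
anticommute with `h`. Hence `h̃` anticommutes with `φ̃ = λ⁻¹ h`, and `h̃² = (a²λ² − b²) p` because
the cross terms cancel. As `φ̃² = p`, anticommutation gives
`tr h̃ = tr (h̃ φ̃ φ̃) = −tr (φ̃ h̃ φ̃) = −tr h̃`.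
Finally `φh` is `g`-self-adjoint and `φ` is `g`-skew-adjoint, so the `g`-adjoint of `h̃` is
`a φh − b φ`, and `(a φh − b φ) φh = φh (a φh + b φ)`.
-/

section Anticommuting

variable {R A : Type*} [CommRing R] [Ring A] [Algebra R A] {i j p : A} {c : R}

lemma anticomm_smul_mul_add_smul (hji : j * i = -(i * j)) (a b : R) :
    (a • (i * j) + b • i) * j = -(j * (a • (i * j) + b • i)) := by
  have hjij : j * (i * j) = -(i * j * j) := by rw [← mul_assoc, hji, neg_mul]
  simp only [add_mul, mul_add, smul_mul_assoc, mul_smul_comm, hji, hjij, smul_neg, neg_add, neg_neg]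

lemma mul_mul_mul_of_anticomm (hji : j * i = -(i * j)) :
    i * j * (i * j) = -(i * i * (j * j)) := by
  calc i * j * (i * j) = i * (j * i) * j := by noncomm_ring
    _ = -(i * i * (j * j)) := by rw [hji]; noncomm_ring

lemma smul_mul_add_smul_mul_self_of_anticomm (hi : i * i = -p) (hj : j * j = c • p)
    (hp : IsIdempotentElem p) (hji : j * i = -(i * j)) (a b : R) :
    (a • (i * j) + b • i) * (a • (i * j) + b • i) = (a ^ 2 * c - b ^ 2) • p := by
  have hsq : i * j * (i * j) = c • p := by
    rw [mul_mul_mul_of_anticomm hji, hi, hj, neg_mul, neg_neg, mul_smul_comm, hp.eq]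
  have hcross : i * j * i = -(i * (i * j)) := by rw [mul_assoc, hji, mul_neg]
  simp only [add_mul, mul_add, smul_mul_assoc, mul_smul_comm, hsq, hcross, hi]
  module

end Anticommuting

section Adjoint

variable {R V : Type*} [CommRing R] [AddCommGroup V] [Module R V]
  {g : LinearMap.BilinForm R V} {φ h : Module.End R V}

lemma isSelfAdjoint_mul_of_anticomm (hφ : g.IsSkewAdjoint φ) (hh : g.IsSelfAdjoint h)
    (hanti : h * φ = -(φ * h)) : g.IsSelfAdjoint (φ * h) := by
  have hadj : g.IsAdjointPair g (φ * h) (h * -φ) := LinearMap.IsAdjointPair.mul hφ hh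
  rwa [mul_neg, hanti, neg_neg] at hadj

lemma isSelfAdjoint_compRight_smul_mul_add_smul (hφ : g.IsSkewAdjoint φ) (hh : g.IsSelfAdjoint h)
    (hanti : h * φ = -(φ * h)) (a b : R) :
    (g.compRight (φ * h)).IsSelfAdjoint (a • (φ * h) + b • φ : Module.End R V) := by
  have hadj : g.IsAdjointPair g (a • (φ * h) + b • φ : Module.End R V)
      (a • (φ * h) + b • -φ : Module.End R V) :=
    ((isSelfAdjoint_mul_of_anticomm hφ hh hanti).smul a).add (hφ.smul b)
  have hswap : (a • (φ * h) + b • -φ) * (φ * h) = φ * h * (a • (φ * h) + b • φ) := by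
    have hcross : φ * h * φ = -(φ * (φ * h)) := by rw [mul_assoc, hanti, mul_neg]
    simp only [add_mul, mul_add, smul_mul_assoc, mul_smul_comm, neg_mul, hcross]
  intro x y
  exact (hadj x ((φ * h) y)).trans (congrArg (g x) (LinearMap.congr_fun hswap y))

end Adjoint

lemma trace_mul_mul_self_eq_zero_of_anticomm {R V : Type*} [CommRing R] [NoZeroDivisors R]
    [NeZero (2 : R)] [AddCommGroup V] [Module R V] {S T : Module.End R V}
    (hanti : T * S = -(S * T)) : LinearMap.trace R V (T * S * S) = 0 := by
  have hneg : LinearMap.trace R V (T * S * S) = -LinearMap.trace R V (T * S * S) := by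
    calc LinearMap.trace R V (T * S * S) = -LinearMap.trace R V (S * T * S) := by
          rw [hanti, neg_mul, map_neg]
      _ = -LinearMap.trace R V (T * S * S) := by rw [mul_assoc S, LinearMap.trace_mul_comm]
  have htwo : 2 * LinearMap.trace R V (T * S * S) = 0 := by linear_combination hneg
  exact (mul_eq_zero.mp htwo).resolve_left two_ne_zero

/-- An almost contact structure `(φ, ξ, η)` on a module: `η ξ = 1` and `φ² = −id + η ⊗ ξ`. No
metric is part of the data. -/
structure IsAlmostContact {R V : Type*} [CommRing R] [AddCommGroup V] [Module R V]
    (φ : Module.End R V) (ξ : V) (η : V →ₗ[R] R) : Prop where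
  eta_xi : η ξ = 1
  apply_apply : ∀ x, φ (φ x) = -x + η x • ξ

/-- The endomorphism `id − η ⊗ ξ`; when `η ξ = 1` it is the projection onto the contact hyperplane
`ker η` along the Reeb vector `ξ`. -/
def horizontalProj {R V : Type*} [CommRing R] [AddCommGroup V] [Module R V]
    (ξ : V) (η : V →ₗ[R] R) : Module.End R V :=
  1 - η.smulRight ξ

section HorizontalProj

variable {R V : Type*} [CommRing R] [AddCommGroup V] [Module R V]
  {φ : Module.End R V} {ξ : V} {η : V →ₗ[R] R}

lemma horizontalProj_apply (ξ : V) (η : V →ₗ[R] R) (x : V) :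
    horizontalProj ξ η x = x - η x • ξ := rfl

lemma isIdempotentElem_horizontalProj (hηξ : η ξ = 1) :
    IsIdempotentElem (horizontalProj ξ η) := by
  ext x
  simp [horizontalProj_apply, hηξ]

lemma mul_horizontalProj_of_apply_eq_zero (hφξ : φ ξ = 0) : φ * horizontalProj ξ η = φ := by
  ext x
  simp [horizontalProj_apply, hφξ]

namespace IsAlmostContact

lemma mul_self (hφ : IsAlmostContact φ ξ η) : φ * φ = -horizontalProj ξ η := by
  ext x
  simp [horizontalProj_apply, hφ.apply_apply, sub_eq_neg_add, add_comm]

lemma apply_xi [IsReduced R] (hφ : IsAlmostContact φ ξ η) : φ ξ = 0 := by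
  have hφφξ : φ (φ ξ) = 0 := by rw [hφ.apply_apply, hφ.eta_xi, one_smul, neg_add_cancel]
  have hline : φ ξ = η (φ ξ) • ξ := by
    have hcube := hφ.apply_apply (φ ξ)
    rwa [hφφξ, map_zero, eq_comm, neg_add_eq_zero] at hcube
  have hsq : η (φ ξ) ^ 2 = 0 := by
    have hη := congrArg η hφφξ
    rwa [hline, map_smul, map_smul, map_zero, smul_eq_mul, ← sq] at hη
  rw [hline, (pow_eq_zero_iff two_ne_zero).mp hsq, zero_smul]

lemma eta_apply [IsReduced R] (hφ : IsAlmostContact φ ξ η) (x : V) : η (φ x) = 0 := by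
  have hline : η (φ x) • ξ = 0 := by
    have hcube := hφ.apply_apply (φ x)
    rwa [hφ.apply_apply x, map_add, map_neg, map_smul, hφ.apply_xi, smul_zero, add_right_inj,
      eq_comm] at hcube
  simpa [hφ.eta_xi] using congrArg η hline

end IsAlmostContact

end HorizontalProj

theorem induced_h_tilde_properties_general {K V : Type*} [Field K] [NeZero (2 : K)]
    [AddCommGroup V] [Module K V] [FiniteDimensional K V]
    {φ h : V →ₗ[K] V} {ξ : V} {η : V →ₗ[K] K} (hφ : IsAlmostContact φ ξ η)
    {g : LinearMap.BilinForm K V} (hgskew : ∀ x y : V, g x (φ y) = - g (φ x) y)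
    (hsa : ∀ x y : V, g (h x) y = g x (h y)) (hanti : ∀ x : V, h (φ x) = - φ (h x))
    {κ : K} (hh : ∀ x : V, h (h x) = (κ - 1) • φ (φ x)) (μ : K)
    {lam : K} (hlam : lam ≠ 0) (hlam_sq : lam ^ 2 = 1 - κ)
    {φt : V →ₗ[K] V} (hφt : ∀ x : V, φt x = lam⁻¹ • h x)
    {gt : V → V → K} (hgt : ∀ x y : V, gt x y = lam⁻¹ * g x (φ (h y)) + η x * η y)
    {ht : V →ₗ[K] V}
    (hht : ∀ x : V, ht x = (2 * lam)⁻¹ • ((2 - μ) • φ (h x) + (2 * (1 - κ)) • φ x)) :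
    ht ξ = 0 ∧
    (∀ x : V, ht (φt x) = - φt (ht x)) ∧
    (∀ x y : V, gt (ht x) y = gt x (ht y)) ∧
    LinearMap.trace K V ht = 0 ∧
    (∀ x : V, ht (ht x) = (1 + ((1 - μ / 2) ^ 2 + κ - 2)) • (x - η x • ξ)) := by
  have hanti_mul : h * φ = -(φ * h) := LinearMap.ext hanti
  have hh_sq : h * h = lam ^ 2 • horizontalProj ξ η := by
    rw [show h * h = (κ - 1) • (φ * φ) from LinearMap.ext hh, hφ.mul_self, hlam_sq]
    module
  have hφt_eq : φt = lam⁻¹ • h := LinearMap.ext hφt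
  have hht_eq : ht = ((2 - μ) / (2 * lam)) • (φ * h) + lam • φ := by
    ext x
    simp only [hht, LinearMap.add_apply, LinearMap.smul_apply, Module.End.mul_apply, ← hlam_sq]
    match_scalars <;> field_simp
  have hφt_sq : φt * φt = horizontalProj ξ η := by
    rw [hφt_eq, smul_mul_smul_comm, hh_sq, smul_smul, ← sq, ← mul_pow, inv_mul_cancel₀ hlam,
      one_pow, one_smul]
  have hhtξ : ht ξ = 0 := by
    have hφhξ : φ (h ξ) = 0 := by rw [← neg_eq_zero, ← hanti, hφ.apply_xi, map_zero]
    simp [hht, hφhξ, hφ.apply_xi]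
  have hη_ht (x : V) : η (ht x) = 0 := by simp [hht, hφ.eta_apply]
  have hht_φt : ht * φt = -(φt * ht) := by
    rw [hφt_eq, mul_smul_comm, smul_mul_assoc, hht_eq,
      anticomm_smul_mul_add_smul hanti_mul, smul_neg]
  refine ⟨hhtξ, LinearMap.congr_fun hht_φt, fun x y ↦ ?_, ?_, fun x ↦ ?_⟩
  · have hskew : g.IsSkewAdjoint φ := fun x y ↦ by simp [hgskew]
    have hadj := isSelfAdjoint_compRight_smul_mul_add_smul hskew hsa hanti_mul
      ((2 - μ) / (2 * lam)) lam
    rw [← hht_eq] at hadj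
    rw [hgt, hgt, hη_ht, hη_ht, zero_mul, mul_zero]
    exact congrArg (lam⁻¹ * · + 0) (hadj x y)
  · rw [← mul_horizontalProj_of_apply_eq_zero (η := η) hhtξ, ← hφt_sq, ← mul_assoc]
    exact trace_mul_mul_self_eq_zero_of_anticomm hht_φt
  · have hcoeff : ((2 - μ) / (2 * lam)) ^ 2 * lam ^ 2 - lam ^ 2 =
        1 + ((1 - μ / 2) ^ 2 + κ - 2) := by
      field_simp
      linear_combination -4 * hlam_sq
    have hsq : ht * ht = (1 + ((1 - μ / 2) ^ 2 + κ - 2)) • horizontalProj ξ η := by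
      rw [hht_eq, smul_mul_add_smul_mul_self_of_anticomm hφ.mul_self hh_sq
        (isIdempotentElem_horizontalProj hφ.eta_xi) hanti_mul, hcoeff]
    exact LinearMap.congr_fun hsq x

/-- With the hypotheses of Statement 11 and a real `μ`, the tensor
`h̃ = (1/(2λ))((2−μ)φ∘h + 2(1−κ)φ)` (where `λ = √(1−κ)`) of the induced paracontact
structure satisfies `h̃ξ = 0`, `h̃φ̃ = −φ̃h̃`, is `g̃`-self-adjoint, has `tr h̃ = 0`, and
`h̃² = (1+κ̃)(id − η⊗ξ)` with `κ̃ = (1 − μ/2)² + κ − 2`. -/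
theorem induced_h_tilde_properties
    (n : ℕ) (V : Type*) [AddCommGroup V] [Module ℝ V] [FiniteDimensional ℝ V]
    (hdim : Module.finrank ℝ V = 2 * n + 1)
    (φ : V →ₗ[ℝ] V) (ξ : V) (η : V →ₗ[ℝ] ℝ)
    (hηξ : η ξ = 1)
    (hφφ : ∀ x : V, φ (φ x) = -x + η x • ξ)
    (g : LinearMap.BilinForm ℝ V)
    (hgsymm : ∀ x y : V, g x y = g y x)
    (hgpos : ∀ x : V, x ≠ 0 → 0 < g x x)
    (hcompat : ∀ x y : V, g (φ x) (φ y) = g x y - η x * η y)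
    (hgskew : ∀ x y : V, g x (φ y) = - g (φ x) y)
    (h : V →ₗ[ℝ] V)
    (hsa : ∀ x y : V, g (h x) y = g x (h y))
    (hanti : ∀ x : V, h (φ x) = - φ (h x))
    (hhξ : h ξ = 0)
    (κ : ℝ) (hκ : κ < 1)
    (hh : ∀ x : V, h (h x) = (κ - 1) • φ (φ x))
    (μ : ℝ)
    (lam : ℝ) (hlam : lam = Real.sqrt (1 - κ))
    (φt : V →ₗ[ℝ] V) (hφt : ∀ x : V, φt x = lam⁻¹ • h x)
    (gt : V → V → ℝ)
    (hgt : ∀ x y : V, gt x y = lam⁻¹ * g x (φ (h y)) + η x * η y)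
    (ht : V →ₗ[ℝ] V)
    (hht : ∀ x : V, ht x = (2 * lam)⁻¹ • ((2 - μ) • φ (h x) + (2 * (1 - κ)) • φ x)) :
    ht ξ = 0 ∧
    (∀ x : V, ht (φt x) = - φt (ht x)) ∧
    (∀ x y : V, gt (ht x) y = gt x (ht y)) ∧
    LinearMap.trace ℝ V ht = 0 ∧
    (∀ x : V, ht (ht x) = (1 + ((1 - μ / 2) ^ 2 + κ - 2)) • (x - η x • ξ)) := by
  have hpos : 0 < 1 - κ := sub_pos.mpr hκ
  exact induced_h_tilde_properties_general ⟨hηξ, hφφ⟩ hgskew hsa hanti hh μ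
    (hlam ▸ (Real.sqrt_pos.mpr hpos).ne') (hlam ▸ Real.sq_sqrt hpos.le) hφt hgt hht
end

section
/- Let V be a 3-dimensional real vector space, (φ, ξ, η, g) an almost contact metric structure on V (n = 1), and h a g-self-adjoint endomorphism with h∘φ = −φ∘h, hξ = 0, and h∘h = (κ−1)·φ∘φ for a real constant κ < 1; set λ = √(1−κ) and g̃(X,Y) = (1/λ)·g(X, (φ∘h)Y) + η(X)η(Y). Let e ∈ ker η be a g-unit vector with he = λe. Then {e, φe, ξ} is a g-orthonormal basis of V, and with respect to g̃ it is a pseudo-orthonormal basis: g̃(e, e) = g̃(φe, φe) = g̃(e, ξ) = g̃(φe, ξ) = 0 and g̃(e, φe) = g̃(ξ, ξ) = 1. -/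
/-!
The induced metric `g̃` is `g` with `e` and `φ e` exchanged in the second argument: since
`h e = λ e` and `h (φ e) = -λ φ e`, one has `g̃(·, e) = g(·, φ e)`, `g̃(·, φ e) = g(·, e)` and
`g̃(·, ξ) = η = g(·, ξ)`. The Gram matrix of `{e, φ e, ξ}` for `g̃` is therefore that for `g`, the
identity, with its first two columns swapped.
-/

/-- An almost contact structure `(φ, ξ, η)` on a module: `η ξ = 1` and `φ² = -id + η ⊗ ξ`. -/
structure IsAlmostContact_s13 {R M : Type*} [CommRing R] [AddCommGroup M] [Module R M]
    (φ : Module.End R M) (ξ : M) (η : Module.Dual R M) : Prop where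
  eta_reeb : η ξ = 1
  phi_phi (x : M) : φ (φ x) = -x + η x • ξ

/-- An almost contact metric structure `(φ, ξ, η, g)`. The metric is allowed to be any symmetric
bilinear form, not only a positive definite one. -/
structure IsAlmostContactMetric_s13 {R M : Type*} [CommRing R] [AddCommGroup M] [Module R M]
    (φ : Module.End R M) (ξ : M) (η : Module.Dual R M) (g : LinearMap.BilinForm R M) : Prop
    extends IsAlmostContact_s13 φ ξ η where
  isSymm : g.IsSymm
  metric_phi_phi (x y : M) : g (φ x) (φ y) = g x y - η x * η y

namespace IsAlmostContact_s13

variable {R M : Type*} [CommRing R] [AddCommGroup M] [Module R M]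
  {φ : Module.End R M} {ξ : M} {η : Module.Dual R M}

theorem smul_reeb_eq_zero_iff (S : IsAlmostContact_s13 φ ξ η) {a : R} : a • ξ = 0 ↔ a = 0 := by
  refine ⟨fun ha => ?_, fun ha => by rw [ha, zero_smul]⟩
  simpa [S.eta_reeb] using congrArg η ha

theorem phi_reeb [IsReduced R] (S : IsAlmostContact_s13 φ ξ η) : φ ξ = 0 := by
  have phi_phi_reeb : φ (φ ξ) = 0 := by
    rw [S.phi_phi, S.eta_reeb, one_smul, neg_add_cancel]
  have phi_reeb_eq : φ ξ = η (φ ξ) • ξ := by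
    have phi_cubed_reeb := S.phi_phi (φ ξ)
    rw [phi_phi_reeb, map_zero] at phi_cubed_reeb
    exact neg_add_eq_zero.mp phi_cubed_reeb.symm
  have sq_smul : (η (φ ξ) ^ 2) • ξ = 0 := by
    rw [pow_two, mul_smul, ← phi_reeb_eq, ← map_smul, ← phi_reeb_eq, phi_phi_reeb]
  rw [phi_reeb_eq, eq_zero_of_pow_eq_zero (S.smul_reeb_eq_zero_iff.mp sq_smul), zero_smul]

theorem eta_phi [IsReduced R] (S : IsAlmostContact_s13 φ ξ η) (x : M) : η (φ x) = 0 := by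
  have phi_cubed : φ (φ (φ x)) = -φ x := by
    rw [S.phi_phi x, map_add, map_neg, map_smul, S.phi_reeb, smul_zero, add_zero]
  rw [S.phi_phi, add_eq_left] at phi_cubed
  exact S.smul_reeb_eq_zero_iff.mp phi_cubed

theorem phi_phi_of_eta_eq_zero (S : IsAlmostContact_s13 φ ξ η) {x : M} (hx : η x = 0) :
    φ (φ x) = -x := by
  rw [S.phi_phi, hx, zero_smul, add_zero]

end IsAlmostContact_s13

namespace IsAlmostContactMetric_s13

section CommRing

variable {R M : Type*} [CommRing R] [AddCommGroup M] [Module R M]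
  {φ : Module.End R M} {ξ : M} {η : Module.Dual R M} {g : LinearMap.BilinForm R M}

theorem metric_reeb [IsReduced R] (S : IsAlmostContactMetric_s13 φ ξ η g) (x : M) : g x ξ = η x := by
  have compat := S.metric_phi_phi x ξ
  rw [S.phi_reeb, map_zero, S.eta_reeb, mul_one] at compat
  exact sub_eq_zero.mp compat.symm

theorem metric_reeb_left [IsReduced R] (S : IsAlmostContactMetric_s13 φ ξ η g) (x : M) :
    g ξ x = η x := by
  rw [S.isSymm.eq, S.metric_reeb]

theorem metric_phi_right [IsReduced R] (S : IsAlmostContactMetric_s13 φ ξ η g) (x y : M) :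
    g x (φ y) = -g (φ x) y := by
  calc g x (φ y) = g (φ x) (φ (φ y)) := by rw [S.metric_phi_phi, S.eta_phi, mul_zero, sub_zero]
    _ = -g (φ x) y := by
      rw [S.phi_phi, map_add, map_neg, map_smul, S.metric_reeb, S.eta_phi, smul_zero, add_zero]

theorem metric_phi_self [NoZeroDivisors R] [NeZero (2 : R)]
    (S : IsAlmostContactMetric_s13 φ ξ η g) (x : M) : g x (φ x) = 0 := by
  have skew := S.metric_phi_right x x
  rw [S.isSymm.eq (φ x) x, eq_neg_iff_add_eq_zero, ← two_mul] at skew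
  exact (mul_eq_zero_iff_left two_ne_zero).mp skew

theorem isOrthoᵢ_phiBasis [NoZeroDivisors R] [NeZero (2 : R)]
    (S : IsAlmostContactMetric_s13 φ ξ η g) {e : M} (hηe : η e = 0) :
    g.IsOrthoᵢ ![e, φ e, ξ] := by
  have e_phi : g e (φ e) = 0 := S.metric_phi_self e
  have phi_e : g (φ e) e = 0 := by rw [S.isSymm.eq, e_phi]
  rw [LinearMap.isOrthoᵢ_def]
  intro i j hij
  fin_cases i <;> fin_cases j <;>
    first
    | exact absurd rfl hij
    | simp [e_phi, phi_e, S.metric_reeb, S.metric_reeb_left, S.eta_phi, hηe]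

end CommRing

section Field

variable {K V : Type*} [Field K] [AddCommGroup V] [Module K V]
  {φ : Module.End K V} {ξ : V} {η : Module.Dual K V} {g : LinearMap.BilinForm K V} {e : V}

theorem linearIndependent_phiBasis [NeZero (2 : K)] (S : IsAlmostContactMetric_s13 φ ξ η g)
    (hηe : η e = 0) (hge : g e e ≠ 0) : LinearIndependent K ![e, φ e, ξ] := by
  refine LinearMap.linearIndependent_of_isOrthoᵢ (S.isOrthoᵢ_phiBasis hηe) fun i => ?_
  fin_cases i
  · exact hge
  · simpa [S.metric_phi_phi, hηe] using hge
  · simp [S.metric_reeb, S.eta_reeb]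

theorem span_phiBasis [NeZero (2 : K)] (S : IsAlmostContactMetric_s13 φ ξ η g)
    (hdim : Module.finrank K V = 3) (hηe : η e = 0) (hge : g e e ≠ 0) :
    Submodule.span K {e, φ e, ξ} = ⊤ := by
  have span_range := (S.linearIndependent_phiBasis hηe hge).span_eq_top_of_card_eq_finrank
    (by rw [Fintype.card_fin, hdim])
  rwa [Matrix.range_cons, Matrix.range_cons_cons_empty, Set.singleton_union] at span_range

end Field

end IsAlmostContactMetric_s13

section InducedForm

variable {K V : Type*} [Field K] [AddCommGroup V] [Module K V]

/-- The metric `g̃ = λ⁻¹ g(·, φ h ·) + η ⊗ η` of the canonical paracontact structure, as a bilinear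
form; `c` stands for the eigenvalue `λ` of `h`. -/
def inducedForm (φ : Module.End K V) (η : Module.Dual K V) (g : LinearMap.BilinForm K V)
    (h : Module.End K V) (c : K) : LinearMap.BilinForm K V :=
  c⁻¹ • g.compRight (φ ∘ₗ h) + LinearMap.BilinForm.linMulLin η η

variable {φ : Module.End K V} {ξ : V} {η : Module.Dual K V} {g : LinearMap.BilinForm K V}
  {h : Module.End K V} {c : K} {e : V}

theorem inducedForm_apply (x y : V) :
    inducedForm φ η g h c x y = c⁻¹ * g x (φ (h y)) + η x * η y :=
  rfl

theorem inducedForm_reeb (hηξ : η ξ = 1) (hhξ : h ξ = 0) (x : V) :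
    inducedForm φ η g h c x ξ = η x := by
  rw [inducedForm_apply, hhξ, map_zero, map_zero, mul_zero, zero_add, hηξ, mul_one]

theorem inducedForm_eigenvector (hc : c ≠ 0) (hηe : η e = 0) (hhe : h e = c • e) (x : V) :
    inducedForm φ η g h c x e = g x (φ e) := by
  rw [inducedForm_apply, hhe, map_smul, map_smul, smul_eq_mul, inv_mul_cancel_left₀ hc, hηe,
    mul_zero, add_zero]

theorem IsAlmostContact_s13.inducedForm_phi_eigenvector (S : IsAlmostContact_s13 φ ξ η)
    (hanti : ∀ x, h (φ x) = -φ (h x)) (hc : c ≠ 0) (hηe : η e = 0) (hhe : h e = c • e) (x : V) :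
    inducedForm φ η g h c x (φ e) = g x e := by
  have phi_h_phi : φ (h (φ e)) = c • e := by
    rw [hanti, hhe, map_smul, map_neg, map_smul, S.phi_phi_of_eta_eq_zero hηe, smul_neg, neg_neg]
  rw [inducedForm_apply, phi_h_phi, map_smul, smul_eq_mul, inv_mul_cancel_left₀ hc, S.eta_phi,
    mul_zero, add_zero]

end InducedForm

theorem phi_basis_is_pseudo_orthonormal_for_induced_metric_general
    {K V : Type*} [Field K] [NeZero (2 : K)] [AddCommGroup V] [Module K V]
    (hdim : Module.finrank K V = 3)
    {φ : Module.End K V} {ξ : V} {η : Module.Dual K V} {g : LinearMap.BilinForm K V}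
    (S : IsAlmostContactMetric_s13 φ ξ η g)
    {h : Module.End K V} (hanti : ∀ x, h (φ x) = -φ (h x)) (hhξ : h ξ = 0)
    {c : K} (hc : c ≠ 0)
    {e : V} (hηe : η e = 0) (hge : g e e = 1) (hhe : h e = c • e) :
    let gt := inducedForm φ η g h c
    LinearIndependent K ![e, φ e, ξ] ∧
    Submodule.span K {e, φ e, ξ} = ⊤ ∧
    g (φ e) (φ e) = 1 ∧ g ξ ξ = 1 ∧
    g e (φ e) = 0 ∧ g e ξ = 0 ∧ g (φ e) ξ = 0 ∧
    gt e e = 0 ∧ gt (φ e) (φ e) = 0 ∧ gt e ξ = 0 ∧ gt (φ e) ξ = 0 ∧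
    gt e (φ e) = 1 ∧ gt ξ ξ = 1 := by
  have e_ne : g e e ≠ 0 := hge ▸ one_ne_zero
  have gt_e := inducedForm_eigenvector (φ := φ) (g := g) hc hηe hhe
  have gt_phi := S.inducedForm_phi_eigenvector (g := g) hanti hc hηe hhe
  have gt_reeb := inducedForm_reeb (φ := φ) (g := g) (c := c) S.eta_reeb hhξ
  refine ⟨S.linearIndependent_phiBasis hηe e_ne, S.span_phiBasis hdim hηe e_ne, ?_⟩
  simp only [gt_e, gt_phi, gt_reeb, S.metric_phi_phi, S.metric_reeb, S.metric_phi_self,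
    S.isSymm.eq (φ e) e, S.eta_phi, S.eta_reeb, hηe, hge, mul_zero, sub_zero, and_self]

/-- On a 3-dimensional almost contact metric vector space with `h`
`g`-self-adjoint, anticommuting with `φ`, `hξ = 0`, `h² = (κ−1)φ²`, `κ < 1`, `λ = √(1−κ)`,
and `g̃ = (1/λ)g(·, φh·) + η⊗η`: if `e ∈ ker η` is a `g`-unit vector with `he = λe`, then
`{e, φe, ξ}` is a `g`-orthonormal basis of `V` which is pseudo-orthonormal for `g̃`:
`g̃(e,e) = g̃(φe,φe) = g̃(e,ξ) = g̃(φe,ξ) = 0` and `g̃(e,φe) = g̃(ξ,ξ) = 1`. -/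
theorem phi_basis_is_pseudo_orthonormal_for_induced_metric
    (V : Type*) [AddCommGroup V] [Module ℝ V] [FiniteDimensional ℝ V]
    (hdim : Module.finrank ℝ V = 3)
    (φ : V →ₗ[ℝ] V) (ξ : V) (η : V →ₗ[ℝ] ℝ)
    (hηξ : η ξ = 1)
    (hφφ : ∀ x : V, φ (φ x) = -x + η x • ξ)
    (g : LinearMap.BilinForm ℝ V)
    (hgsymm : ∀ x y : V, g x y = g y x)
    (hgpos : ∀ x : V, x ≠ 0 → 0 < g x x)
    (hcompat : ∀ x y : V, g (φ x) (φ y) = g x y - η x * η y)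
    (hgskew : ∀ x y : V, g x (φ y) = - g (φ x) y)
    (h : V →ₗ[ℝ] V)
    (hsa : ∀ x y : V, g (h x) y = g x (h y))
    (hanti : ∀ x : V, h (φ x) = - φ (h x))
    (hhξ : h ξ = 0)
    (κ : ℝ) (hκ : κ < 1)
    (hh : ∀ x : V, h (h x) = (κ - 1) • φ (φ x))
    (lam : ℝ) (hlam : lam = Real.sqrt (1 - κ))
    (gt : V → V → ℝ)
    (hgt : ∀ x y : V, gt x y = lam⁻¹ * g x (φ (h y)) + η x * η y)
    (e : V) (heη : η e = 0) (hge : g e e = 1) (heig : h e = lam • e) :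
    LinearIndependent ℝ ![e, φ e, ξ] ∧
    Submodule.span ℝ {e, φ e, ξ} = ⊤ ∧
    g (φ e) (φ e) = 1 ∧ g ξ ξ = 1 ∧
    g e (φ e) = 0 ∧ g e ξ = 0 ∧ g (φ e) ξ = 0 ∧
    gt e e = 0 ∧ gt (φ e) (φ e) = 0 ∧ gt e ξ = 0 ∧ gt (φ e) ξ = 0 ∧
    gt e (φ e) = 1 ∧ gt ξ ξ = 1 := by
  have hlam_ne : lam ≠ 0 := hlam ▸ (Real.sqrt_pos.mpr (sub_pos.mpr hκ)).ne'
  obtain rfl : gt = fun x y => inducedForm φ η g h lam x y := funext₂ hgt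
  exact phi_basis_is_pseudo_orthonormal_for_induced_metric_general hdim
    ⟨⟨hηξ, hφφ⟩, ⟨hgsymm⟩, hcompat⟩ hanti hhξ hlam_ne heη hge heig
end
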